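/- arXiv:1106.0082 — 2 statements merged into one kernel-verified Lean document; each statement's English description precedes it below -/
import Mathlib

section
/- Let k ≥ 1, ℓ ≥ 1, N ≥ 1, and let F be a linearly closed differential field of characteristic zero with constants C. Consider the families of elements s^{m_0,…,m_k}_{i_0,…,i_k} ∈ F, indexed by i_0,…,i_k ∈ {1,…,ℓ} and by tuples (m_0,…,m_k) ∈ {0,…,N}^{k+1} whose non-increasing rearrangement satisfies μ_0 − μ_1 = 1, which are skewsymmetric with respect to simultaneous permutations of upper and lower indices (s^{m_{σ(0)},…,m_{σ(k)}}_{i_{σ(0)},…,i_{σ(k)}} = sign(σ)·s^{m_0,…,m_k}_{i_0,…,i_k} for all σ ∈ S_{k+1}) and which satisfy, for all i_0,…,i_k ∈ {1,…,ℓ}, the equation Σ_{(m_0,…,m_k)} Λ₀^{m_0}(λ_1^{m_1}⋯λ_k^{m_k} · s^{m_0,…,m_k}_{i_0,…,i_k}) = 0 in F[λ_1,…,λ_k]. These families form a vector space over C of dimension D = Σ_{n=0}^{N−1} ( binom((n+1)ℓ, k+1) − binom(nℓ, k+1) − ℓ·binom(nℓ, k) ). -/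
/-- A derivation on a field: an additive map satisfying the Leibniz rule. -/
structure IsDerivation {F : Type*} [Field F] (d : F → F) : Prop where
  map_add : ∀ a b : F, d (a + b) = d a + d b
  leibniz : ∀ a b : F, d (a * b) = d a * b + a * d b

/-- A differential field `(F, d)` is linearly closed if every linear differential equation
`a_M d^M u + ⋯ + a_1 d u + a_0 u = b` with `a_M ≠ 0` has a solution in `F`,
and has a nonzero solution for `b = 0`, provided that `M ≥ 1`. -/
def LinearlyClosed {F : Type*} [Field F] (d : F → F) : Prop :=
  ∀ (M : ℕ) (a : ℕ → F), a M ≠ 0 →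
    (∀ b : F, ∃ u : F, ∑ n ∈ Finset.range (M + 1), a n * d^[n] u = b) ∧
    (1 ≤ M → ∃ u : F, u ≠ 0 ∧ ∑ n ∈ Finset.range (M + 1), a n * d^[n] u = 0)

/-- The derivation `∂̂` of `F[λ_1,…,λ_k]` acting as `d` on coefficients and annihilating
the variables. -/
noncomputable def coeffDer {F : Type*} [Field F] (d : F → F) {k : ℕ}
    (Q : MvPolynomial (Fin k) F) : MvPolynomial (Fin k) F :=
  ∑ m ∈ Q.support, (MvPolynomial.monomial m) (d (MvPolynomial.coeff m Q))

/-- `Λ₀(Q) = −(λ_1+⋯+λ_k)·Q − ∂̂(Q)`. -/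
noncomputable def lamZero {F : Type*} [Field F] (d : F → F) {k : ℕ} :
    MvPolynomial (Fin k) F → MvPolynomial (Fin k) F :=
  fun Q => -((∑ a : Fin k, MvPolynomial.X a) * Q) - coeffDer d Q

/-- A tuple `(m_0,…,m_k)` of natural numbers whose non-increasing rearrangement
`(μ_0,…,μ_k)` satisfies `μ_0 − μ_1 = 1`. -/
def gapOne (k : ℕ) (m : Fin (k + 1) → ℕ) : Prop :=
  ∃ σ : Equiv.Perm (Fin (k + 1)), Antitone (fun j => m (σ j)) ∧ m (σ 0) = m (σ 1) + 1

/-!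
Put `T = λ₀ + ⋯ + λ_k + ∂̂` on `F[λ₀,…,λ_k]`. Since `λ₀ - T` restricts to `Λ₀` on `F[λ₁,…,λ_k]` and
commutes with `λ₀`, the powers of `λ₀` and `Λ₀` agree modulo the image of `T`, which meets
`F[λ₁,…,λ_k]` only in zero. So the equations on `s` say that the generating polynomials of `s` are
of the form `T Q`.

Looking at the terms of highest degree shows that `T Q` is supported on exponents with
`μ₀ - μ₁ = 1` and `μ₀ ≤ N` exactly if `Q` is supported on flat exponents, those with `μ₀ = μ₁` and
`μ₀ < N`, and the coefficients of `T Q` at flat exponents vanish. The latter condition is an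
equation `(∂ + A) Q = 0`, where `A` is a compression of the multiplication by `λ₀ + ⋯ + λ_k` and
hence nilpotent. If `∂ x = 1`, then conjugation by `exp (-x A)` transforms it into `∂ Q = 0`.

Thus the dimension is that of the space of skewsymmetric families of constants on flat
multi-indices, that is, the number of `(k + 1)`-element subsets of `{0,…,N-1} × {1,…,ℓ}` whose
highest level occurs at least twice. The other subsets have a unique element of highest level `n`,
and there are `ℓ · binom(nℓ, k)` of them for each `n < N`.
-/

section Exponential

lemma mul_pow_succ_of_mul_eq_mul_sub {R : Type*} [Ring R] {D Z A : R} (hDZ : D * Z = Z * D - A)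
    (hAZ : Commute A Z) (n : ℕ) :
    D * Z ^ (n + 1) = Z ^ (n + 1) * D - (n + 1) • (A * Z ^ n) := by
  induction n with
  | zero => simpa using hDZ
  | succ n ih =>
    calc D * Z ^ (n + 2) = D * Z ^ (n + 1) * Z := by rw [pow_succ _ (n + 1), mul_assoc]
      _ = Z ^ (n + 1) * (D * Z) - (n + 1) • (A * Z ^ (n + 1)) := by
        rw [ih, sub_mul, smul_mul_assoc, mul_assoc A, ← pow_succ, mul_assoc]
      _ = Z ^ (n + 2) * D - (n + 1 + 1) • (A * Z ^ (n + 1)) := by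
        rw [hDZ, mul_sub, ← mul_assoc, ← pow_succ, ← (hAZ.pow_right (n + 1)).eq,
          succ_nsmul _ (n + 1)]
        abel

/-- With `D` as the derivation, `-Z` is a primitive of `A`: this is the integrating factor. -/
lemma add_mul_exp_eq_exp_mul {R : Type*} [Ring R] [Module ℚ R] {D Z A : R}
    (hDZ : D * Z = Z * D - A) (hAZ : Commute A Z) (hZ : IsNilpotent Z) :
    (D + A) * IsNilpotent.exp Z = IsNilpotent.exp Z * D := by
  obtain ⟨n, hn⟩ := hZ
  have hn' : Z ^ (n + 1) = 0 := by rw [pow_succ, hn, zero_mul]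
  suffices h : D * IsNilpotent.exp Z = IsNilpotent.exp Z * D - A * IsNilpotent.exp Z by
    rw [add_mul, h, sub_add_cancel]
  have hterm (i : ℕ) : D * (((i + 1).factorial : ℚ)⁻¹ • Z ^ (i + 1)) =
      ((i + 1).factorial : ℚ)⁻¹ • Z ^ (i + 1) * D - A * ((i.factorial : ℚ)⁻¹ • Z ^ i) := by
    have hfact : ((i + 1).factorial : ℚ)⁻¹ * (i + 1 : ℕ) = (i.factorial : ℚ)⁻¹ := by
      rw [Nat.factorial_succ]
      push_cast
      field_simp
    rw [mul_smul_comm, mul_pow_succ_of_mul_eq_mul_sub hDZ hAZ, smul_sub, smul_mul_assoc,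
      mul_smul_comm, ← Nat.cast_smul_eq_nsmul ℚ (i + 1), smul_smul, hfact]
  calc D * IsNilpotent.exp Z
      = D + ∑ i ∈ Finset.range n, D * (((i + 1).factorial : ℚ)⁻¹ • Z ^ (i + 1)) := by
        rw [IsNilpotent.exp_eq_sum hn', Finset.sum_range_succ', mul_add, Finset.mul_sum]
        simp [add_comm]
    _ = (D + ∑ i ∈ Finset.range n, (((i + 1).factorial : ℚ)⁻¹ • Z ^ (i + 1)) * D)
        - A * ∑ i ∈ Finset.range n, (i.factorial : ℚ)⁻¹ • Z ^ i := by
        rw [Finset.sum_congr rfl fun i _ => hterm i, Finset.sum_sub_distrib, Finset.mul_sum,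
          add_sub_assoc]
    _ = IsNilpotent.exp Z * D - A * IsNilpotent.exp Z := by
        rw [← IsNilpotent.exp_eq_sum hn, IsNilpotent.exp_eq_sum hn', Finset.sum_range_succ',
          add_mul, Finset.sum_mul]
        simp [add_comm]

lemma rank_ker_add_of_isNilpotent {C W : Type*} [CommRing C] [Algebra ℚ C] [AddCommGroup W]
    [Module C W] {D X A : Module.End C W} (hDX : D * X = X * D + 1) (hAD : Commute A D)
    (hAX : Commute A X) (hA : IsNilpotent A) :
    Module.rank C (LinearMap.ker (D + A)) = Module.rank C (LinearMap.ker D) := by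
  let _ : Module ℚ (Module.End C W) := Module.compHom _ (algebraMap ℚ C)
  have hZ : IsNilpotent (-(X * A)) := (hAX.symm.isNilpotent_mul_left hA).neg
  have hconj := add_mul_exp_eq_exp_mul (D := D) (Z := -(X * A)) (A := A)
    (by rw [mul_neg, neg_mul, ← mul_assoc, hDX, mul_assoc, hAD.eq, add_mul, one_mul, mul_assoc]
        abel)
    (hAX.mul_right (Commute.refl A)).neg_right hZ
  have hbij := (Module.End.isUnit_iff _).mp (IsNilpotent.isUnit_exp hZ)
  have hker : (LinearMap.ker D).map (IsNilpotent.exp (-(X * A))) = LinearMap.ker (D + A) := by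
    ext w
    obtain ⟨v, rfl⟩ := hbij.surjective w
    have hv : (D + A) (IsNilpotent.exp (-(X * A)) v) = IsNilpotent.exp (-(X * A)) (D v) :=
      LinearMap.congr_fun hconj v
    rw [← SetLike.mem_coe, Submodule.map_coe, hbij.injective.mem_set_image, SetLike.mem_coe,
      LinearMap.mem_ker, LinearMap.mem_ker, hv, map_eq_zero_iff _ hbij.injective]
  rw [← hker]
  exact (Submodule.equivMapOfInjective _ hbij.injective _).rank_eq.symm

lemma rank_inf_ker_add_of_isNilpotent {C W : Type*} [CommRing C] [Algebra ℚ C] [AddCommGroup W]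
    [Module C W] {D X A : Module.End C W} (hDX : D * X = X * D + 1) (hAD : Commute A D)
    (hAX : Commute A X) (hA : IsNilpotent A) {p : Submodule C W} (hDp : ∀ w ∈ p, D w ∈ p)
    (hXp : ∀ w ∈ p, X w ∈ p) (hAp : ∀ w ∈ p, A w ∈ p) :
    Module.rank C ↥(p ⊓ LinearMap.ker (D + A)) = Module.rank C ↥(p ⊓ LinearMap.ker D) := by
  have hrank (f : Module.End C W) (hf : ∀ w ∈ p, f w ∈ p) :
      Module.rank C ↥(p ⊓ LinearMap.ker f) = Module.rank C (LinearMap.ker (f.restrict hf)) := by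
    rw [← Submodule.map_comap_subtype, ← LinearMap.ker_restrict hf]
    exact (Submodule.equivMapOfInjective _ p.injective_subtype _).rank_eq.symm
  have hnil : IsNilpotent (A.restrict hAp) := by
    obtain ⟨n, hn⟩ := hA
    exact ⟨n, by rw [Module.End.pow_restrict]; ext w; simp [hn]⟩
  rw [hrank D hDp, hrank (D + A) fun w hw => p.add_mem (hDp w hw) (hAp w hw),
    ← rank_ker_add_of_isNilpotent (D := D.restrict hDp) (X := X.restrict hXp) _
      (LinearMap.restrict_commute hAD hAp hDp) (LinearMap.restrict_commute hAX hAp hXp) hnil]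
  · rfl
  · ext w
    simpa using LinearMap.congr_fun hDX w

end Exponential

section Families

variable {α ι : Type*} [DecidableEq α]

/-- The multi-index obtained from `w` by decreasing the level `(w j).1` at the position `j` by one
(truncated at `0`). -/
def lower (w : α → ℕ × ι) (j : α) : α → ℕ × ι :=
  Function.update w j ((w j).1 - 1, (w j).2)

/-- The multi-index obtained from `w` by increasing the level `(w j).1` at the position `j` by
one. -/
def raise (w : α → ℕ × ι) (j : α) : α → ℕ × ι :=
  Function.update w j ((w j).1 + 1, (w j).2)

lemma lower_raise_self (w : α → ℕ × ι) (j : α) : lower (raise w j) j = w := by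
  simp [lower, raise]

lemma lower_apply (w : α → ℕ × ι) (j i : α) :
    lower w j i = (if i = j then (w i).1 - 1 else (w i).1, (w i).2) := by
  by_cases h : i = j
  · subst h; simp [lower]
  · simp [lower, h]

lemma raise_apply (w : α → ℕ × ι) (j i : α) :
    raise w j i = (if i = j then (w i).1 + 1 else (w i).1, (w i).2) := by
  by_cases h : i = j
  · subst h; simp [raise]
  · simp [raise, h]

lemma lower_comp_perm (w : α → ℕ × ι) (σ : Equiv.Perm α) (j : α) :
    lower (w ∘ σ) j = lower w (σ j) ∘ σ := by
  ext1 i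
  simp [lower, Function.update_apply]

variable (R : Type*) {M : Type*} [CommRing R] [AddCommGroup M] [Module R M] [Fintype α]

/-- If `f` is read as the family of coefficients of polynomials, `w ↦ (w ·).1` being the exponent,
this is multiplication by the sum of the variables. -/
def lowerSum : ((α → ℕ × ι) → M) →ₗ[R] ((α → ℕ × ι) → M) where
  toFun f w := ∑ j, if (w j).1 = 0 then 0 else f (lower w j)
  map_add' f g := by
    ext w
    simp only [Pi.add_apply, ← Finset.sum_add_distrib]
    exact Finset.sum_congr rfl fun j _ => by split_ifs <;> simp
  map_smul' c f := by
    ext w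
    simp only [Pi.smul_apply, Finset.smul_sum, RingHom.id_apply]
    exact Finset.sum_congr rfl fun j _ => by split_ifs <;> simp

lemma lowerSum_apply (f : (α → ℕ × ι) → M) (w : α → ℕ × ι) :
    lowerSum R f w = ∑ j, if (w j).1 = 0 then 0 else f (lower w j) := rfl

lemma lowerSum_comp_perm (f : (α → ℕ × ι) → M) (σ : Equiv.Perm α) (w : α → ℕ × ι) :
    lowerSum R f (w ∘ σ) = lowerSum R (fun v => f (v ∘ σ)) w := by
  simp only [lowerSum_apply, lower_comp_perm]
  exact Equiv.sum_comp σ fun j => if (w j).1 = 0 then 0 else f (lower w j ∘ σ)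

lemma lowerSum_map (e : M →ₗ[R] M) (f : (α → ℕ × ι) → M) (w : α → ℕ × ι) :
    lowerSum R (fun v => e (f v)) w = e (lowerSum R f w) := by
  simp only [lowerSum_apply, map_sum, apply_ite e, map_zero]

variable {R}

/-- The operator on families corresponding to `P ↦ (∑ λ_j) P + ∂̂ P` on polynomials, where `∂̂` is
`d` acting on coefficients. -/
def familyDer (d : M →ₗ[R] M) : ((α → ℕ × ι) → M) →ₗ[R] ((α → ℕ × ι) → M) :=
  d.compLeft _ + lowerSum R

variable (d : M →ₗ[R] M) (f : (α → ℕ × ι) → M)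

lemma familyDer_apply (w : α → ℕ × ι) :
    familyDer d f w = d (f w) + lowerSum R f w := rfl

lemma familyDer_comp_perm (σ : Equiv.Perm α) (w : α → ℕ × ι) :
    familyDer d f (w ∘ σ) = familyDer d (fun v => f (v ∘ σ)) w := by
  rw [familyDer_apply, familyDer_apply, lowerSum_comp_perm]

variable {d f}

lemma familyDer_raise {w : α → ℕ × ι} {j : α} (hj : f (raise w j) = 0)
    (hi : ∀ i ≠ j, (w i).1 ≠ 0 → f (lower (raise w j) i) = 0) :
    familyDer d f (raise w j) = f w := by
  rw [familyDer_apply, hj, map_zero, zero_add, lowerSum_apply, Finset.sum_eq_single j]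
  · rw [lower_raise_self, if_neg (by simp [raise_apply])]
  · intro i _ hij
    by_cases hwi : (w i).1 = 0
    · simp [raise_apply, hij, hwi]
    · rw [hi i hij hwi, ite_self]
  · simp

/- A nonzero family that is bounded in the level at `j` has a nonzero image, as seen by looking at
its values of highest level at `j`. -/
lemma eq_zero_of_familyDer_raise_eq_zero {w : α → ℕ × ι} {j : α}
    (hbdd : ∃ B, ∀ v, (∀ i, (v i).2 = (w i).2) → B ≤ (v j).1 → f v = 0)
    (h : ∀ v, (∀ i, (v i).2 = (w i).2) → (w j).1 ≤ (v j).1 → (∀ i ≠ j, (v i).1 ≤ (w i).1) →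
      familyDer d f (raise v j) = 0) :
    f w = 0 := by
  obtain ⟨B, hB⟩ := hbdd
  suffices H : ∀ e v, (∀ i, (v i).2 = (w i).2) → (w j).1 ≤ (v j).1 →
      (∀ i ≠ j, (v i).1 ≤ (w i).1) → B ≤ (v j).1 + e → f v = 0 from
    H B w (fun _ => rfl) le_rfl (fun _ _ => le_rfl) (by omega)
  intro e
  induction e with
  | zero => exact fun v hv _ _ hvB => hB v hv hvB
  | succ e ih =>
    intro v hv hvj hvi hvB
    rw [← h v hv hvj hvi, familyDer_raise]
    · refine ih _ (by simpa [raise_apply] using hv) ?_ ?_ ?_ <;> simp only [raise_apply] <;> grind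
    · intro i hij _
      refine ih _ (by simpa [lower_apply, raise_apply] using hv) ?_ ?_ ?_ <;>
        simp only [lower_apply, raise_apply] <;> grind

end Families

section Support

variable {α ι : Type*}

/-- The multi-indices with levels below `N` whose highest level is attained at least twice. -/
def flatIndices (α ι : Type*) (N : ℕ) : Set (α → ℕ × ι) :=
  {w | (∀ j, ∃ i, i ≠ j ∧ (w j).1 ≤ (w i).1) ∧ ∀ j, (w j).1 < N}

/-- The multi-indices with levels at most `N` whose highest level is attained exactly once and
exceeds the second highest level by one. -/
def gapIndices (α ι : Type*) (N : ℕ) : Set (α → ℕ × ι) :=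
  {w | (∃ p q, (w p).1 = (w q).1 + 1 ∧ ∀ i ≠ p, (w i).1 < (w p).1) ∧ ∀ j, (w j).1 ≤ N}

lemma comp_perm_mem_flatIndices {N : ℕ} {w : α → ℕ × ι} (σ : Equiv.Perm α) :
    w ∘ σ ∈ flatIndices α ι N ↔ w ∈ flatIndices α ι N := by
  constructor
  · rintro ⟨hflat, hN⟩
    refine ⟨σ.surjective.forall.mpr fun j => ?_, σ.surjective.forall.mpr hN⟩
    obtain ⟨i, hij, hi⟩ := hflat j
    exact ⟨σ i, σ.injective.ne hij, hi⟩
  · rintro ⟨hflat, hN⟩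
    refine ⟨fun j => ?_, fun j => hN (σ j)⟩
    obtain ⟨i, hij, hi⟩ := hflat (σ j)
    refine ⟨σ.symm i, by rintro rfl; simp at hij, by simpa using hi⟩

lemma mem_gapIndices_of_lower_mem_flatIndices [DecidableEq α] {N : ℕ} {w : α → ℕ × ι} {j : α}
    (hlow : lower w j ∈ flatIndices α ι N) (hj : (w j).1 ≠ 0) (hw : w ∉ flatIndices α ι N) :
    w ∈ gapIndices α ι N := by
  obtain ⟨hflat, hN⟩ := hlow
  simp only [lower_apply] at hflat hN
  have hwN (i : α) : (w i).1 ≤ N := by grind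
  have htop : ∀ i ≠ j, (w i).1 < (w j).1 := by
    by_contra! h
    refine hw ⟨fun p => ?_, by grind⟩
    obtain ⟨i, hip, hi⟩ := hflat p
    grind
  obtain ⟨q, hqj, hq⟩ := hflat j
  refine ⟨⟨j, q, ?_, htop⟩, hwN⟩
  have := htop q hqj
  grind

lemma disjoint_gapIndices_flatIndices (α ι : Type*) (N : ℕ) :
    Disjoint (gapIndices α ι N) (flatIndices α ι N) := by
  rw [Set.disjoint_left]
  rintro w ⟨⟨p, -, -, hp⟩, -⟩ ⟨hflat, -⟩
  obtain ⟨i, hip, hpi⟩ := hflat p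
  exact (hp i hip).not_ge hpi

variable {R M : Type*} [CommRing R] [AddCommGroup M] [Module R M] [Fintype α] [DecidableEq α]
  {d : M →ₗ[R] M} {f : (α → ℕ × ι) → M} {N : ℕ}

lemma eq_zero_of_notMem_flatIndices
    (hbdd : ∀ w : α → ℕ × ι, ∃ B, ∀ v, (∀ i, (v i).2 = (w i).2) → (∃ j, B ≤ (v j).1) → f v = 0)
    (hf : ∀ w ∉ gapIndices α ι N, familyDer d f w = 0) {w : α → ℕ × ι}
    (hw : w ∉ flatIndices α ι N) : f w = 0 := by
  obtain ⟨j, hj⟩ : ∃ j, (∀ i ≠ j, (w i).1 < (w j).1) ∨ N ≤ (w j).1 := by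
    by_contra! h
    exact hw ⟨fun j => (h j).1, fun j => (h j).2⟩
  obtain ⟨B, hB⟩ := hbdd w
  refine eq_zero_of_familyDer_raise_eq_zero ⟨B, fun v hv hvj => hB v hv ⟨j, hvj⟩⟩
    fun v _ hvj hvi => hf _ ?_
  rintro ⟨⟨p, q, hpq, hp⟩, hN⟩
  simp only [raise_apply] at hpq hp hN
  grind

lemma familyDer_eq_zero_of_notMem_gapIndices (hf : ∀ w ∉ flatIndices α ι N, f w = 0)
    (hdf : ∀ w ∈ flatIndices α ι N, familyDer d f w = 0) {w : α → ℕ × ι}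
    (hw : w ∉ gapIndices α ι N) : familyDer d f w = 0 := by
  by_cases hflat : w ∈ flatIndices α ι N
  · exact hdf w hflat
  rw [familyDer_apply, hf w hflat, map_zero, zero_add, lowerSum_apply]
  refine Finset.sum_eq_zero fun j _ => ?_
  split_ifs with hj
  · rfl
  · exact hf _ fun hlow => hw (mem_gapIndices_of_lower_mem_flatIndices hlow hj hflat)

end Support

section Skew

open Equiv.Perm (sign)

/-- The families indexed by `w : α → J` that are skewsymmetric under permutations of the entries of
`w` and supported on `S`. -/
def skewFamilies (R M : Type*) {α J : Type*} [CommRing R] [AddCommGroup M] [Module R M]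
    [Fintype α] [DecidableEq α] (S : Set (α → J)) : Submodule R ((α → J) → M) where
  carrier := {f | (∀ (σ : Equiv.Perm α) w, f (w ∘ σ) = (sign σ : ℤ) • f w) ∧ ∀ w ∉ S, f w = 0}
  zero_mem' := by simp
  add_mem' {f g} hf hg :=
    ⟨fun σ w => by simp [hf.1 σ w, hg.1 σ w], fun w hw => by simp [hf.2 w hw, hg.2 w hw]⟩
  smul_mem' c f hf :=
    ⟨fun σ w => by simp [hf.1 σ w, smul_comm c], fun w hw => by simp [hf.2 w hw]⟩

variable {R M : Type*} [CommRing R] [AddCommGroup M] [Module R M]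

lemma compLeft_mem_skewFamilies {M' α J : Type*} [AddCommGroup M'] [Module R M'] [Fintype α]
    [DecidableEq α] {S : Set (α → J)} (e : M →ₗ[R] M') {f : (α → J) → M}
    (hf : f ∈ skewFamilies R M S) : e.compLeft _ f ∈ skewFamilies R M' S :=
  ⟨fun σ w => by simp [hf.1 σ w], fun w hw => by simp [hf.2 w hw]⟩

lemma skewFamilies_inf_ker_compLeft {M' M'' α J : Type*} [AddCommGroup M'] [Module R M']
    [AddCommGroup M''] [Module R M''] [Fintype α] [DecidableEq α] (S : Set (α → J))
    {e : M →ₗ[R] M'} {d : M' →ₗ[R] M''} (he : Function.Injective e) (hed : Function.Exact e d) :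
    skewFamilies R M' S ⊓ LinearMap.ker (d.compLeft (α → J)) =
      (skewFamilies R M S).map (e.compLeft _) := by
  ext f
  constructor
  · rintro ⟨hf, hdf⟩
    choose g hg using fun w => (hed (f w)).mp (congrFun hdf w)
    refine ⟨g, ⟨fun σ w => he ?_, fun w hw => he ?_⟩, funext hg⟩
    · rw [hg, hf.1, map_zsmul, hg]
    · rw [hg, hf.2 w hw, map_zero]
  · rintro ⟨g, hg, rfl⟩
    exact ⟨compLeft_mem_skewFamilies e hg, funext fun w => hed.apply_apply_eq_zero (g w)⟩

lemma eq_zero_of_skew_of_not_injective [IsAddTorsionFree M] {α J : Type*} [Fintype α]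
    [DecidableEq α] {f : (α → J) → M}
    (hf : ∀ (σ : Equiv.Perm α) w, f (w ∘ σ) = (sign σ : ℤ) • f w) {w : α → J}
    (hw : ¬ Function.Injective w) : f w = 0 := by
  obtain ⟨a, b, hab, hne⟩ := Function.not_injective_iff.mp hw
  have hswap : w ∘ Equiv.swap a b = w := by
    rw [Equiv.comp_swap_eq_update, hab, Function.update_eq_self, ← hab, Function.update_eq_self]
  have h := hf (Equiv.swap a b) w
  rw [hswap, Equiv.Perm.sign_swap hne, Units.val_neg, Units.val_one, neg_one_zsmul] at h
  exact self_eq_neg.mp h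

variable {J : Type*} [LinearOrder J] {n : ℕ}

lemma comp_sort_eq_orderEmbOfFin (w : Fin n ↪ J) {t : Finset J} (ht : t.card = n)
    (hwt : Finset.univ.map w = t) : w ∘ Tuple.sort w = t.orderEmbOfFin ht := by
  refine Finset.orderEmbOfFin_unique ht (fun i => ?_)
    ((Tuple.monotone_sort w).strictMono_of_injective (w.injective.comp (Tuple.sort w).injective))
  exact hwt ▸ Finset.mem_map_of_mem w (Finset.mem_univ _)

open Classical in
/-- The skewsymmetric family with value `c t` at the increasing enumeration of each `n`-element set
`t`. -/
noncomputable def skewExtend (n : ℕ) (c : Finset J → M) (w : Fin n → J) : M :=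
  if hw : Function.Injective w then
    (sign (Tuple.sort w) : ℤ) • c (Finset.univ.map ⟨w, hw⟩)
  else 0

lemma skewExtend_comp_perm (c : Finset J → M) (σ : Equiv.Perm (Fin n)) (w : Fin n → J) :
    skewExtend n c (w ∘ σ) = (sign σ : ℤ) • skewExtend n c w := by
  by_cases hw : Function.Injective w
  · have hsort : Tuple.sort w = σ * Tuple.sort (w ∘ σ) :=
      Equiv.ext fun j => hw (congrFun Tuple.comp_perm_comp_sort_eq_comp_sort.symm j)
    have hmap : Finset.univ.map ⟨w ∘ σ, hw.comp σ.injective⟩ = Finset.univ.map ⟨w, hw⟩ := by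
      rw [← Finset.coe_inj, Finset.coe_map, Finset.coe_map, Finset.coe_univ, Set.image_univ,
        Set.image_univ]
      exact σ.surjective.range_comp w
    rw [skewExtend, skewExtend, dif_pos hw, dif_pos (hw.comp σ.injective), hmap, hsort, smul_smul,
      Equiv.Perm.sign_mul, Units.val_mul, ← mul_assoc, Int.units_coe_mul_self, one_mul]
  · rw [skewExtend, skewExtend, dif_neg hw, dif_neg (by rwa [σ.injective_comp]), smul_zero]

lemma skewExtend_orderEmbOfFin (c : Finset J → M) {t : Finset J} (ht : t.card = n) :
    skewExtend n c (t.orderEmbOfFin ht) = c t := by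
  rw [skewExtend, dif_pos (t.orderEmbOfFin ht).injective,
    Tuple.sort_eq_refl_iff_monotone.mpr (t.orderEmbOfFin ht).monotone, Equiv.Perm.sign_refl,
    Units.val_one, one_smul]
  exact congrArg c (Finset.map_orderEmbOfFin_univ t ht)

omit [LinearOrder J] in
lemma nonempty_skewFamilies_equiv [IsAddTorsionFree M] {S : Set (Fin n → J)}
    {T : Finset (Finset J)} (hT : ∀ t ∈ T, t.card = n)
    (hST : ∀ w : Fin n ↪ J, ⇑w ∈ S ↔ Finset.univ.map w ∈ T) :
    Nonempty (skewFamilies R M S ≃ₗ[R] (T → M)) := by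
  classical
  let _ : LinearOrder J := linearOrderOfSTO WellOrderingRel
  let eval : skewFamilies R M S →ₗ[R] (T → M) :=
    LinearMap.pi fun t =>
      LinearMap.proj (t.1.orderEmbOfFin (hT t t.2) : Fin n → J) ∘ₗ (skewFamilies R M S).subtype
  refine ⟨LinearEquiv.ofBijective eval ⟨(injective_iff_map_eq_zero eval).mpr ?_, fun c => ?_⟩⟩
  · rintro ⟨f, hf⟩ hzero
    ext w
    by_cases hw : Function.Injective w
    swap; · exact eq_zero_of_skew_of_not_injective hf.1 hw
    by_cases hwS : w ∈ S
    swap; · exact hf.2 w hwS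
    have hmap := (hST ⟨w, hw⟩).mp hwS
    have hsort : f (w ∘ Tuple.sort w) = 0 :=
      (congrArg f (comp_sort_eq_orderEmbOfFin ⟨w, hw⟩ (hT _ hmap) rfl)).trans
        (congrFun hzero ⟨_, hmap⟩)
    rw [hf.1] at hsort
    exact (smul_eq_zero_iff_right (Units.ne_zero _)).mp hsort
  · let c' : Finset J → M := fun t => if ht : t ∈ T then c ⟨t, ht⟩ else 0
    have hsupp (w : Fin n → J) (hwS : w ∉ S) : skewExtend n c' w = 0 := by
      by_cases hw : Function.Injective w
      · rw [skewExtend, dif_pos hw]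
        simp [c', ← hST, hwS]
      · rw [skewExtend, dif_neg hw]
    refine ⟨⟨skewExtend n c', skewExtend_comp_perm c', hsupp⟩, funext fun t => ?_⟩
    calc skewExtend n c' (t.1.orderEmbOfFin (hT t t.2)) = c' t :=
          skewExtend_orderEmbOfFin c' (hT t t.2)
      _ = c t := by simp [c']

omit [LinearOrder J] in
lemma rank_skewFamilies_inf_ker_compLeft {C V : Type*} [Field C] [CharZero C] [AddCommGroup V]
    [Module C V] {e : C →ₗ[C] V} {d : V →ₗ[C] V} (he : Function.Injective e)
    (hed : Function.Exact e d) {S : Set (Fin n → J)} {T : Finset (Finset J)}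
    (hT : ∀ t ∈ T, t.card = n) (hST : ∀ w : Fin n ↪ J, ⇑w ∈ S ↔ Finset.univ.map w ∈ T) :
    Module.rank C ↥(skewFamilies C V S ⊓ LinearMap.ker (d.compLeft (Fin n → J))) = T.card := by
  obtain ⟨φ⟩ := nonempty_skewFamilies_equiv (R := C) (M := C) hT hST
  have he' : Function.Injective (e.compLeft (Fin n → J)) := he.comp_left
  have hrank := (φ.symm.trans (Submodule.equivMapOfInjective _ he' _)).lift_rank_eq
  rw [skewFamilies_inf_ker_compLeft S he hed]
  simpa [rank_fun'] using hrank.symm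

end Skew

section Truncation

variable {α ι : Type*} [Fintype α] [DecidableEq α] {R M : Type*} [CommRing R] [AddCommGroup M]
  [Module R M] {S : Set (α → ℕ × ι)}

/-- The operator `lowerSum` followed by restriction to the multi-indices in `S`. -/
noncomputable def truncLowerSum (R M : Type*) [CommRing R] [AddCommGroup M] [Module R M]
    (S : Set (α → ℕ × ι)) : Module.End R ((α → ℕ × ι) → M) where
  toFun f := S.indicator (lowerSum R f)
  map_add' f g := by rw [map_add, Set.indicator_add']
  map_smul' c f := by rw [map_smul, RingHom.id_apply]; exact Set.indicator_const_smul S c _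

lemma truncLowerSum_apply_of_mem {w : α → ℕ × ι} (hw : w ∈ S) (f : (α → ℕ × ι) → M) :
    truncLowerSum R M S f w = lowerSum R f w := Set.indicator_of_mem hw _

lemma truncLowerSum_apply_of_notMem {w : α → ℕ × ι} (hw : w ∉ S) (f : (α → ℕ × ι) → M) :
    truncLowerSum R M S f w = 0 := Set.indicator_of_notMem hw _

lemma commute_truncLowerSum_compLeft (S : Set (α → ℕ × ι)) (e : M →ₗ[R] M) :
    Commute (truncLowerSum R M S) (e.compLeft (α → ℕ × ι)) := by
  refine LinearMap.ext fun f => funext fun w => ?_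
  change truncLowerSum R M S (fun v => e (f v)) w = e (truncLowerSum R M S f w)
  by_cases hw : w ∈ S
  · rw [truncLowerSum_apply_of_mem hw, truncLowerSum_apply_of_mem hw, lowerSum_map]
  · rw [truncLowerSum_apply_of_notMem hw, truncLowerSum_apply_of_notMem hw, map_zero]

lemma sum_fst_lower_add_one {w : α → ℕ × ι} {j : α} (hj : (w j).1 ≠ 0) :
    ∑ i, (lower w j i).1 + 1 = ∑ i, (w i).1 := by
  rw [← Finset.sum_erase_add _ _ (Finset.mem_univ j),
    ← Finset.sum_erase_add _ _ (Finset.mem_univ j),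
    Finset.sum_congr rfl fun i hi => by rw [lower_apply, if_neg (Finset.ne_of_mem_erase hi)]]
  simp only [lower_apply, if_true]
  omega

lemma truncLowerSum_pow_apply_eq_zero (f : (α → ℕ × ι) → M) (r : ℕ) (w : α → ℕ × ι)
    (hw : ∑ i, (w i).1 < r) : (truncLowerSum R M S ^ r) f w = 0 := by
  induction r generalizing w with
  | zero => omega
  | succ r ih =>
    rw [pow_succ', Module.End.mul_apply]
    by_cases hS : w ∈ S
    · rw [truncLowerSum_apply_of_mem hS, lowerSum_apply]
      refine Finset.sum_eq_zero fun j _ => ?_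
      split_ifs with hj
      · rfl
      · exact ih _ (by have := sum_fst_lower_add_one hj; omega)
    · exact truncLowerSum_apply_of_notMem hS _

lemma isNilpotent_truncLowerSum {N : ℕ} (hS : ∀ w ∈ S, ∀ j, (w j).1 < N) :
    IsNilpotent (truncLowerSum R M S) := by
  refine ⟨Fintype.card α * N + 1, LinearMap.ext fun f => funext fun w => ?_⟩
  by_cases hw : w ∈ S
  · refine truncLowerSum_pow_apply_eq_zero f _ w (Nat.lt_succ_of_le ?_)
    simpa using Finset.sum_le_card_nsmul Finset.univ (fun i => (w i).1) N fun i _ => (hS w hw i).le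
  · rw [pow_succ', Module.End.mul_apply, truncLowerSum_apply_of_notMem hw]
    rfl

lemma truncLowerSum_mem_skewFamilies (hS : ∀ (σ : Equiv.Perm α) w, w ∘ σ ∈ S ↔ w ∈ S)
    {f : (α → ℕ × ι) → M} (hf : f ∈ skewFamilies R M S) :
    truncLowerSum R M S f ∈ skewFamilies R M S := by
  refine ⟨fun σ w => ?_, fun w hw => truncLowerSum_apply_of_notMem hw f⟩
  by_cases hw : w ∈ S
  · rw [truncLowerSum_apply_of_mem hw, truncLowerSum_apply_of_mem ((hS σ w).mpr hw),
      lowerSum_comp_perm, show (fun v => f (v ∘ σ)) = _ from funext fun v => hf.1 σ v]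
    exact congrFun (map_zsmul (lowerSum R) _ f) w
  · rw [truncLowerSum_apply_of_notMem hw, truncLowerSum_apply_of_notMem (mt (hS σ w).mp hw),
      smul_zero]

lemma compLeft_add_truncLowerSum_eq_zero_iff {d : M →ₗ[R] M} {f : (α → ℕ × ι) → M}
    (hf : ∀ w ∉ S, f w = 0) :
    (d.compLeft (α → ℕ × ι) + truncLowerSum R M S) f = 0 ↔ ∀ w ∈ S, familyDer d f w = 0 := by
  rw [funext_iff]
  refine forall_congr' fun w => ?_
  by_cases hw : w ∈ S
  · simp [hw, familyDer_apply, truncLowerSum_apply_of_mem]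
  · simp [hw, hf, truncLowerSum_apply_of_notMem]

theorem rank_skewFamilies_inf_ker_add_truncLowerSum {C V : Type*} [Field C] [CharZero C]
    [AddCommGroup V] [Module C V] {d x : Module.End C V} (hdx : d * x = x * d + 1)
    {N : ℕ} (hSN : ∀ w ∈ S, ∀ j, (w j).1 < N)
    (hS : ∀ (σ : Equiv.Perm α) w, w ∘ σ ∈ S ↔ w ∈ S) :
    Module.rank C ↥(skewFamilies C V S ⊓
        LinearMap.ker (d.compLeft (α → ℕ × ι) + truncLowerSum C V S)) =
      Module.rank C ↥(skewFamilies C V S ⊓ LinearMap.ker (d.compLeft (α → ℕ × ι))) :=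
  rank_inf_ker_add_of_isNilpotent (X := x.compLeft _)
    (LinearMap.ext fun f => funext fun w => LinearMap.congr_fun hdx (f w))
    (commute_truncLowerSum_compLeft S d) (commute_truncLowerSum_compLeft S x)
    (isNilpotent_truncLowerSum hSN) (fun _ => compLeft_mem_skewFamilies d)
    (fun _ => compLeft_mem_skewFamilies x) (fun _ => truncLowerSum_mem_skewFamilies hS)

end Truncation

section Polynomials

open MvPolynomial

variable {R F : Type*} [CommRing R] [Field F] [Algebra R F] {n : ℕ} (d : F →ₗ[R] F)

lemma coeff_coeffDer (P : MvPolynomial (Fin n) F) (m : Fin n →₀ ℕ) :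
    coeff m (coeffDer d P) = d (coeff m P) := by
  simp only [coeffDer, coeff_sum, coeff_monomial, Finset.sum_ite_eq']
  split_ifs with h
  · rfl
  · rw [notMem_support_iff.mp h, map_zero]

lemma coeffDer_add (P Q : MvPolynomial (Fin n) F) :
    coeffDer d (P + Q) = coeffDer d P + coeffDer d Q := by
  ext m
  simp only [coeff_coeffDer, coeff_add, map_add]

lemma coeffDer_monomial (m : Fin n →₀ ℕ) (a : F) :
    coeffDer d (monomial m a) = monomial m (d a) := by
  ext m'
  simp only [coeff_coeffDer, coeff_monomial, apply_ite d, map_zero]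

lemma coeffDer_X_mul (j : Fin n) (P : MvPolynomial (Fin n) F) :
    coeffDer d (X j * P) = X j * coeffDer d P := by
  ext m
  simp only [coeff_coeffDer, coeff_X_mul', apply_ite d, map_zero]

lemma coeffDer_rename {n' : ℕ} (e : Fin n → Fin n') (P : MvPolynomial (Fin n) F) :
    coeffDer d (rename e P) = rename e (coeffDer d P) := by
  induction P using MvPolynomial.induction_on' with
  | monomial m a => simp only [rename_monomial, coeffDer_monomial]
  | add P Q hP hQ => simp only [map_add, coeffDer_add, hP, hQ]

/-- The operator `P ↦ (∑ λ_j) P + ∂̂ P`, that is `-Λ₀`, as a linear map. -/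
noncomputable def totalDer (d : F →ₗ[R] F) :
    MvPolynomial (Fin n) F →ₗ[R] MvPolynomial (Fin n) F where
  toFun P := (∑ j, X j) * P + coeffDer d P
  map_add' P Q := by rw [coeffDer_add]; ring
  map_smul' c P := by
    have hc : coeffDer d (c • P) = c • coeffDer d P := by
      ext m
      simp only [coeff_coeffDer, coeff_smul, map_smul]
    rw [hc, mul_smul_comm, ← smul_add, RingHom.id_apply]

lemma totalDer_apply (P : MvPolynomial (Fin n) F) :
    totalDer d P = (∑ j, X j) * P + coeffDer d P := rfl

lemma lamZero_iterate (r : ℕ) (P : MvPolynomial (Fin n) F) :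
    (lamZero d)^[r] P = ((-totalDer d) ^ r) P := by
  have h : lamZero d = ⇑(-totalDer (n := n) d) := by
    ext1 P
    rw [lamZero, LinearMap.neg_apply, totalDer_apply, neg_add, sub_eq_add_neg]
  rw [h, Module.End.pow_apply]

lemma totalDer_rename_succ (P : MvPolynomial (Fin n) F) :
    totalDer d (rename Fin.succ P) =
      X 0 * rename Fin.succ P + rename Fin.succ (totalDer d P) := by
  simp only [totalDer_apply, coeffDer_rename, Fin.sum_univ_succ, map_add, map_mul, map_sum,
    rename_X]
  ring

/- `λ₀ - (λ₀ - T) = T` for `T = totalDer d`, and `λ₀ - T` extends `Λ₀` and commutes with `λ₀`: hence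
`λ₀ʳ` and `Λ₀ʳ` agree modulo the range of `T`. -/
lemma X_zero_pow_mul_rename_sub_mem_range (r : ℕ) (P : MvPolynomial (Fin n) F) :
    X 0 ^ r * rename Fin.succ P - rename Fin.succ ((lamZero d)^[r] P) ∈
      LinearMap.range (totalDer (n := n + 1) d) := by
  let lam : Module.End R (MvPolynomial (Fin (n + 1)) F) := LinearMap.mulLeft R (X 0)
  let T : Module.End R (MvPolynomial (Fin (n + 1)) F) := totalDer d
  have hcomm : Commute lam (lam - T) := by
    refine (Commute.refl lam).sub_right (LinearMap.ext fun Q => ?_)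
    change X 0 * totalDer d Q = totalDer d (X 0 * Q)
    rw [totalDer_apply, totalDer_apply, coeffDer_X_mul]
    ring
  have hlam : (lam ^ r) (rename Fin.succ P) = X 0 ^ r * rename Fin.succ P := by
    rw [LinearMap.pow_mulLeft, LinearMap.mulLeft_apply]
  let inc : MvPolynomial (Fin n) F →ₗ[R] MvPolynomial (Fin (n + 1)) F :=
    ((rename Fin.succ).toLinearMap).restrictScalars R
  have hinc : (lam - T) ∘ₗ inc = inc ∘ₗ (-totalDer d) := LinearMap.ext fun Q => by
    change X 0 * rename Fin.succ Q - totalDer d (rename Fin.succ Q) =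
      rename Fin.succ (-totalDer d Q)
    rw [totalDer_rename_succ, map_neg]
    ring
  have hLam : ((lam - T) ^ r) (rename Fin.succ P) = rename Fin.succ ((lamZero d)^[r] P) := by
    rw [lamZero_iterate]
    exact LinearMap.congr_fun (Module.End.commute_pow_left_of_commute hinc r) P
  rw [← hlam, ← hLam, ← LinearMap.sub_apply, ← hcomm.mul_geom_sum₂, sub_sub_cancel]
  exact ⟨_, rfl⟩

/-- The family of all coefficients of a family of polynomials. -/
noncomputable def coeffFamily {α ι : Type*} [Finite α] (Q : (α → ι) → MvPolynomial α F)
    (w : α → ℕ × ι) : F :=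
  coeff (Finsupp.equivFunOnFinite.symm fun j => (w j).1) (Q fun j => (w j).2)

lemma coeffFamily_injective {α ι : Type*} [Finite α] :
    Function.Injective (coeffFamily : ((α → ι) → MvPolynomial α F) → (α → ℕ × ι) → F) := by
  intro P Q h
  ext i m
  simpa [coeffFamily] using congrFun h fun j => (m j, i j)

lemma exists_forall_coeffFamily_eq_zero {α ι : Type*} [Finite α]
    (Q : (α → ι) → MvPolynomial α F) (w : α → ℕ × ι) :
    ∃ B, ∀ v, (∀ i, (v i).2 = (w i).2) → (∃ j, B ≤ (v j).1) → coeffFamily Q v = 0 := by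
  refine ⟨(Q fun j => (w j).2).totalDegree + 1, fun v hv ⟨j, hj⟩ => ?_⟩
  rw [coeffFamily, funext hv]
  by_contra h
  have := (monomial_le_degreeOf j (mem_support_iff.mpr h)).trans (degreeOf_le_totalDegree _ j)
  simp only [Finsupp.equivFunOnFinite_symm_apply_apply] at this
  omega

lemma familyDer_coeffFamily {ι : Type*} (Q : (Fin n → ι) → MvPolynomial (Fin n) F) :
    familyDer d (coeffFamily Q) = coeffFamily fun i => totalDer d (Q i) := by
  ext w
  rw [familyDer_apply, lowerSum_apply, coeffFamily, coeffFamily, totalDer_apply, Finset.sum_mul,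
    coeff_add, coeff_coeffDer, coeff_sum, add_comm]
  congr 1
  refine Finset.sum_congr rfl fun j _ => ?_
  have hlower : (Finsupp.equivFunOnFinite.symm fun i => (w i).1) - Finsupp.single j 1 =
      Finsupp.equivFunOnFinite.symm fun i => (lower w j i).1 := by
    ext i
    simp [lower_apply, Finsupp.single_apply, eq_comm (a := j), sub_ite]
  simp only [coeff_X_mul', hlower, coeffFamily, lower_apply, Finsupp.mem_support_iff,
    Finsupp.equivFunOnFinite_symm_apply_apply, ite_not]

lemma eq_zero_of_rename_succ_mem_range_totalDer {P : MvPolynomial (Fin n) F}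
    (hP : rename Fin.succ P ∈ LinearMap.range (totalDer (n := n + 1) d)) : P = 0 := by
  obtain ⟨Q, hQ⟩ := hP
  let Q' : (Fin (n + 1) → Unit) → MvPolynomial (Fin (n + 1)) F := fun _ => Q
  have hfam : coeffFamily Q' = 0 := by
    ext w
    obtain ⟨B, hB⟩ := exists_forall_coeffFamily_eq_zero Q' w
    refine eq_zero_of_familyDer_raise_eq_zero (d := d) (j := 0)
      ⟨B, fun v hv hvj => hB v hv ⟨0, hvj⟩⟩ fun v _ _ _ => ?_
    rw [familyDer_coeffFamily, coeffFamily, hQ]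
    refine coeff_rename_eq_zero _ _ _ fun u hu => absurd (DFunLike.congr_fun hu 0) ?_
    rw [Finsupp.mapDomain_of_notMem_range]
    · simp [raise_apply]
    · simp
  have hQ' : Q' = 0 := coeffFamily_injective (hfam.trans (funext fun _ => (coeff_zero _).symm))
  rw [show Q = 0 from congrFun hQ' fun _ => (), map_zero] at hQ
  exact (map_eq_zero_iff _ (rename_injective _ (Fin.succ_injective n))).mp hQ.symm

theorem sum_lamZero_iterate_eq_zero_iff {κ : Type*} (s : Finset κ) (r : κ → ℕ)
    (P : κ → MvPolynomial (Fin n) F) :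
    ∑ a ∈ s, (lamZero d)^[r a] (P a) = 0 ↔
      ∑ a ∈ s, X 0 ^ r a * rename Fin.succ (P a) ∈ LinearMap.range (totalDer (n := n + 1) d) := by
  have hmod : ∑ a ∈ s, X 0 ^ r a * rename Fin.succ (P a) -
      rename Fin.succ (∑ a ∈ s, (lamZero d)^[r a] (P a)) ∈
        LinearMap.range (totalDer (n := n + 1) d) := by
    rw [map_sum, ← Finset.sum_sub_distrib]
    exact Submodule.sum_mem _ fun a _ => X_zero_pow_mul_rename_sub_mem_range d (r a) (P a)
  constructor
  · intro h
    rwa [h, map_zero, sub_zero] at hmod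
  · intro h
    exact eq_zero_of_rename_succ_mem_range_totalDer d ((Submodule.sub_mem_iff_right _ h).mp hmod)

end Polynomials

section Box

open MvPolynomial

variable {α ι : Type*} {M : ℕ}

/-- The multi-index with levels `m` and entries `i`. -/
def boxIndex (p : (α → Fin M) × (α → ι)) : α → ℕ × ι := fun j => (p.1 j, p.2 j)

lemma boxIndex_injective : Function.Injective (boxIndex : (α → Fin M) × (α → ι) → α → ℕ × ι) := by
  rintro ⟨m, i⟩ ⟨m', i'⟩ h
  simp only [boxIndex, _root_.funext_iff, Prod.mk.injEq, Fin.val_inj, forall_and] at h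
  exact Prod.ext (funext h.1) (funext h.2)

lemma exists_boxIndex_eq_iff {w : α → ℕ × ι} :
    (∃ p : (α → Fin M) × (α → ι), boxIndex p = w) ↔ ∀ j, (w j).1 < M :=
  ⟨by rintro ⟨p, rfl⟩ j; exact (p.1 j).isLt,
    fun h => ⟨(fun j => ⟨(w j).1, h j⟩, fun j => (w j).2), rfl⟩⟩

variable {F : Type*}

/-- The extension by zero of a family with levels below `M` to a family with arbitrary levels. -/
noncomputable def extendZero [Zero F] (s : (α → Fin M) → (α → ι) → F) : (α → ℕ × ι) → F :=
  Function.extend boxIndex (Function.uncurry s) 0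

lemma extendZero_boxIndex [Zero F] (s : (α → Fin M) → (α → ι) → F)
    (p : (α → Fin M) × (α → ι)) : extendZero s (boxIndex p) = s p.1 p.2 :=
  boxIndex_injective.extend_apply _ _ p

lemma extendZero_eq_zero [Zero F] (s : (α → Fin M) → (α → ι) → F) {w : α → ℕ × ι}
    (hw : ¬ ∀ j, (w j).1 < M) : extendZero s w = 0 :=
  Function.extend_apply' _ _ w (mt exists_boxIndex_eq_iff.mp hw)

/-- The restriction of a family to levels below `M`. -/
def boxRestrict (R F α ι : Type*) [CommRing R] [AddCommGroup F] [Module R F] (M : ℕ) :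
    ((α → ℕ × ι) → F) →ₗ[R] ((α → Fin M) → (α → ι) → F) where
  toFun f m i := f (boxIndex (m, i))
  map_add' _ _ := rfl
  map_smul' _ _ := rfl

lemma extendZero_boxRestrict {R : Type*} [CommRing R] [AddCommGroup F] [Module R F]
    {f : (α → ℕ × ι) → F} (hf : ∀ w, (¬ ∀ j, (w j).1 < M) → f w = 0) :
    extendZero (boxRestrict R F α ι M f) = f := by
  ext w
  by_cases hw : ∀ j, (w j).1 < M
  · obtain ⟨p, rfl⟩ := exists_boxIndex_eq_iff.mpr hw
    exact extendZero_boxIndex _ p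
  · rw [extendZero_eq_zero _ hw, hf w hw]

lemma boxRestrict_extendZero {R : Type*} [CommRing R] [AddCommGroup F] [Module R F]
    (s : (α → Fin M) → (α → ι) → F) : boxRestrict R F α ι M (extendZero s) = s :=
  funext fun m => funext fun i => extendZero_boxIndex s (m, i)

lemma coeffFamily_sum_monomial [Field F] [Fintype α] [DecidableEq α]
    (s : (α → Fin M) → (α → ι) → F) :
    coeffFamily (fun i => ∑ m,
      monomial (Finsupp.equivFunOnFinite.symm fun j => (m j : ℕ)) (s m i)) = extendZero s := by
  ext w
  have hcoeff (m : α → Fin M) (c : F) :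
      coeff (Finsupp.equivFunOnFinite.symm fun j => (w j).1)
        (monomial (Finsupp.equivFunOnFinite.symm fun j => (m j : ℕ)) c) =
      if ∀ j, (m j : ℕ) = (w j).1 then c else 0 := by
    rw [coeff_monomial]
    exact if_congr (by rw [Equiv.apply_eq_iff_eq, _root_.funext_iff]) rfl rfl
  simp only [coeffFamily, coeff_sum, hcoeff]
  by_cases hw : ∀ j, (w j).1 < M
  · obtain ⟨⟨m, i⟩, rfl⟩ := exists_boxIndex_eq_iff.mpr hw
    rw [extendZero_boxIndex]
    simp [boxIndex, Fin.val_inj, ← _root_.funext_iff]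
  · rw [extendZero_eq_zero _ hw]
    refine Finset.sum_eq_zero fun m _ => if_neg fun h => hw fun j => by rw [← h j]; exact (m j).isLt

lemma exists_coeffFamily_eq [Field F] [Finite α] {f : (α → ℕ × ι) → F}
    (hf : ∀ w, (¬ ∀ j, (w j).1 < M) → f w = 0) :
    ∃ Q : (α → ι) → MvPolynomial α F, coeffFamily Q = f := by
  classical
  have := Fintype.ofFinite α
  exact ⟨_, (coeffFamily_sum_monomial (boxRestrict ℤ F α ι M f)).trans (extendZero_boxRestrict hf)⟩

variable {R : Type*} [CommRing R] [Field F] [Algebra R F] (d : F →ₗ[R] F)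

lemma sum_lamZero_iterate_monomial_eq_zero_iff {k : ℕ} (t : (Fin (k + 1) → Fin M) → F) :
    ∑ m : Fin (k + 1) → Fin M, (lamZero d)^[(m 0 : ℕ)]
        (monomial (Finsupp.equivFunOnFinite.symm fun a : Fin k => (m a.succ : ℕ)) (t m)) = 0 ↔
      ∑ m, monomial (Finsupp.equivFunOnFinite.symm fun j => (m j : ℕ)) (t m) ∈
        LinearMap.range (totalDer (n := k + 1) d) := by
  have hsplit (m : Fin (k + 1) → Fin M) (c : F) :
      X 0 ^ (m 0 : ℕ) * rename Fin.succ
        (monomial (Finsupp.equivFunOnFinite.symm fun a : Fin k => (m a.succ : ℕ)) c) =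
      monomial (Finsupp.equivFunOnFinite.symm fun j => (m j : ℕ)) c := by
    rw [rename_monomial, X_pow_eq_monomial, monomial_mul, one_mul]
    congr 2
    ext j
    cases j using Fin.cases with
    | zero => simp [Finsupp.mapDomain_of_notMem_range]
    | succ a => simp [Finsupp.mapDomain_apply (Fin.succ_injective k)]
  simp only [sum_lamZero_iterate_eq_zero_iff, hsplit]

lemma forall_sum_lamZero_iterate_eq_zero_iff {k : ℕ}
    (s : (Fin (k + 1) → Fin M) → (Fin (k + 1) → ι) → F) :
    (∀ i, ∑ m : Fin (k + 1) → Fin M, (lamZero d)^[(m 0 : ℕ)]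
        (monomial (Finsupp.equivFunOnFinite.symm fun a : Fin k => (m a.succ : ℕ)) (s m i)) = 0) ↔
      ∃ Q, familyDer d (coeffFamily Q) = extendZero s := by
  simp only [sum_lamZero_iterate_monomial_eq_zero_iff, familyDer_coeffFamily, LinearMap.mem_range,
    ← coeffFamily_sum_monomial, coeffFamily_injective.eq_iff, _root_.funext_iff, Classical.skolem]

end Box

section Counting

open Finset

variable {ι : Type*} [Fintype ι] [DecidableEq ι]

/-- The `n`-element sets of pairs (level, index) with levels below `N` whose highest level is
attained at least twice: the underlying sets of the injective elements of `flatIndices`. -/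
def flatSubsets (ι : Type*) [Fintype ι] [DecidableEq ι] (N n : ℕ) : Finset (Finset (ℕ × ι)) :=
  {t ∈ powersetCard n (range N ×ˢ univ) | ∀ x ∈ t, ∃ y ∈ t, y ≠ x ∧ x.1 ≤ y.1}

lemma mem_flatSubsets {N n : ℕ} {t : Finset (ℕ × ι)} :
    t ∈ flatSubsets ι N n ↔
      ((∀ x ∈ t, x.1 < N) ∧ #t = n) ∧ ∀ x ∈ t, ∃ y ∈ t, y ≠ x ∧ x.1 ≤ y.1 := by
  simp [flatSubsets, subset_iff]

lemma mem_flatIndices_iff_map_mem_flatSubsets {N n : ℕ} (w : Fin n ↪ ℕ × ι) :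
    ⇑w ∈ flatIndices (Fin n) ι N ↔ univ.map w ∈ flatSubsets ι N n := by
  simp [flatIndices, mem_flatSubsets, and_comm, w.injective.eq_iff, -Prod.exists]

lemma mem_powersetCard_sdiff_flatSubsets {N n : ℕ} {t : Finset (ℕ × ι)} :
    t ∈ powersetCard n (range N ×ˢ univ) \ flatSubsets ι N n ↔
      ((∀ x ∈ t, x.1 < N) ∧ #t = n) ∧ ∃ x ∈ t, ∀ y ∈ t, y ≠ x → y.1 < x.1 := by
  have h : t ∈ powersetCard n (range N ×ˢ univ) ↔ (∀ x ∈ t, x.1 < N) ∧ #t = n := by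
    simp [subset_iff]
  rw [mem_sdiff, h, mem_flatSubsets]
  refine and_congr_right fun ht => ?_
  rw [not_and, forall_prop_of_true ht]
  push Not
  rfl

/- A set that is not flat consists of a top element `x` and a set of elements of lower level. -/
lemma card_powersetCard_sdiff_flatSubsets (N k : ℕ) :
    #(powersetCard (k + 1) (range N ×ˢ univ) \ flatSubsets ι N (k + 1)) =
      ∑ n ∈ range N, Fintype.card ι * (n * Fintype.card ι).choose k := by
  let tops : Finset ((_ : ℕ × ι) × Finset (ℕ × ι)) :=
    (range N ×ˢ univ).sigma fun x => powersetCard k (range x.1 ×ˢ univ)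
  have htops {x : ℕ × ι} {t : Finset (ℕ × ι)} :
      ⟨x, t⟩ ∈ tops ↔ x.1 < N ∧ (∀ y ∈ t, y.1 < x.1) ∧ #t = k := by
    simp [tops, subset_iff]
  have hcard : #tops = ∑ n ∈ range N, Fintype.card ι * (n * Fintype.card ι).choose k := by
    simp [tops, card_sigma, sum_product]
  rw [← hcard]
  symm
  refine card_bij (fun p _ => insert p.1 p.2) ?_ ?_ ?_
  · rintro ⟨x, t⟩ hxt
    obtain ⟨hxN, hlt, hk⟩ := htops.mp hxt
    rw [mem_powersetCard_sdiff_flatSubsets, forall_mem_insert, exists_mem_insert,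
      card_insert_of_notMem fun hx => (hlt x hx).false, hk]
    refine ⟨⟨⟨hxN, fun y hy => (hlt y hy).trans hxN⟩, rfl⟩, Or.inl fun y hy hyx => ?_⟩
    exact hlt y (mem_of_mem_insert_of_ne hy hyx)
  · rintro ⟨x, t⟩ hxt ⟨y, u⟩ hyu h
    obtain ⟨-, hlt, -⟩ := htops.mp hxt
    obtain ⟨-, hlu, -⟩ := htops.mp hyu
    obtain rfl : x = y := by
      by_contra hxy
      have hxu : x ∈ u := mem_of_mem_insert_of_ne (h ▸ mem_insert_self x t) hxy
      have hyt : y ∈ t := mem_of_mem_insert_of_ne (h ▸ mem_insert_self y u) (Ne.symm hxy)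
      exact (hlt y hyt).asymm (hlu x hxu)
    rw [← erase_insert fun hx => (hlt x hx).false, ← erase_insert fun hx => (hlu x hx).false, h]
  · intro t ht
    obtain ⟨⟨htN, htk⟩, x, hxt, hx⟩ := mem_powersetCard_sdiff_flatSubsets.mp ht
    refine ⟨⟨x, t.erase x⟩, htops.mpr ⟨htN x hxt, fun y hy => ?_, ?_⟩, insert_erase hxt⟩
    · exact hx y (mem_of_mem_erase hy) (ne_of_mem_erase hy)
    · rw [card_erase_of_mem hxt, htk, Nat.add_sub_cancel]

theorem card_flatSubsets (N k : ℕ) :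
    (#(flatSubsets ι N (k + 1)) : ℤ) = ∑ n ∈ range N,
      ((((n + 1) * Fintype.card ι).choose (k + 1) : ℤ) - ((n * Fintype.card ι).choose (k + 1) : ℤ)
        - (Fintype.card ι : ℤ) * ((n * Fintype.card ι).choose k : ℤ)) := by
  have htotal : #(powersetCard (k + 1) (range N ×ˢ univ) \ flatSubsets ι N (k + 1)) +
      #(flatSubsets ι N (k + 1)) = (N * Fintype.card ι).choose (k + 1) := by
    rw [flatSubsets, card_sdiff_add_card_eq_card (filter_subset _ _), card_powersetCard,
      card_product, card_range, card_univ]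
  have htelescope := sum_range_sub (fun n => ((n * Fintype.card ι).choose (k + 1) : ℤ)) N
  rw [card_powersetCard_sdiff_flatSubsets] at htotal
  rw [sum_sub_distrib, htelescope, zero_mul, Nat.choose_zero_succ, ← htotal]
  push_cast
  ring

end Counting

section FlatSolutions

variable {α ι R : Type*} [CommRing R] [Fintype α] [DecidableEq α] {N : ℕ}

/-- The skewsymmetric families supported on `flatIndices` that `familyDer d` maps to a family
vanishing on `flatIndices`. The last condition is encoded as the kernel of the compression of
`familyDer d` to `flatIndices`. -/
noncomputable def flatSolutions {M : Type*} [AddCommGroup M] [Module R M] (d : M →ₗ[R] M)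
    (α ι : Type*) [Fintype α] [DecidableEq α] (N : ℕ) : Submodule R ((α → ℕ × ι) → M) :=
  skewFamilies R M (flatIndices α ι N) ⊓
    LinearMap.ker (d.compLeft (α → ℕ × ι) + truncLowerSum R M (flatIndices α ι N))

section Module

variable {M : Type*} [AddCommGroup M] [Module R M] {d : M →ₗ[R] M} {f : (α → ℕ × ι) → M}

lemma mem_flatSolutions : f ∈ flatSolutions d α ι N ↔
    f ∈ skewFamilies R M (flatIndices α ι N) ∧ ∀ w ∈ flatIndices α ι N, familyDer d f w = 0 := by
  rw [flatSolutions, Submodule.mem_inf, LinearMap.mem_ker]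
  exact and_congr_right fun hf => compLeft_add_truncLowerSum_eq_zero_iff hf.2

lemma familyDer_mem_skewFamilies_gapIndices (hf : f ∈ flatSolutions d α ι N) :
    familyDer d f ∈ skewFamilies R M (gapIndices α ι N) := by
  obtain ⟨⟨hskew, hflat⟩, hker⟩ := mem_flatSolutions.mp hf
  refine ⟨fun σ w => ?_, fun w => familyDer_eq_zero_of_notMem_gapIndices hflat hker⟩
  rw [familyDer_comp_perm, show (fun v => f (v ∘ σ)) = _ from funext (hskew σ)]
  exact congrFun (map_zsmul (familyDer d) _ f) w

lemma eq_zero_of_familyDer_eq_zero [Nonempty α] (hf : ∀ w j, N ≤ (w j).1 → f w = 0)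
    (hdf : familyDer d f = 0) : f = 0 := by
  obtain ⟨j⟩ := ‹Nonempty α›
  exact funext fun w => eq_zero_of_familyDer_raise_eq_zero (j := j)
    ⟨N, fun v _ => hf v j⟩ fun v _ _ _ => congrFun hdf _

end Module

variable {F : Type*} [Field F] [Algebra R F] {d : F →ₗ[R] F}

theorem coeffFamily_mem_flatSolutions_iff [Nonempty α] {Q : (α → ι) → MvPolynomial α F} :
    coeffFamily Q ∈ flatSolutions d α ι N ↔
      familyDer d (coeffFamily Q) ∈ skewFamilies R F (gapIndices α ι N) := by
  refine ⟨familyDer_mem_skewFamilies_gapIndices, fun ⟨hskew, hgap⟩ => ?_⟩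
  have hflat (w) (hw : w ∉ flatIndices α ι N) : coeffFamily Q w = 0 :=
    eq_zero_of_notMem_flatIndices (exists_forall_coeffFamily_eq_zero Q) hgap hw
  have hhigh (w) (j : α) (hj : N ≤ (w j).1) : coeffFamily Q w = 0 :=
    hflat w fun hw => (hw.2 j).not_ge hj
  refine mem_flatSolutions.mpr ⟨⟨fun σ w => ?_, hflat⟩, fun w hw =>
    hgap w fun hw' => (disjoint_gapIndices_flatIndices α ι N).notMem_of_mem_left hw' hw⟩
  have hdefect :
      (fun v => coeffFamily Q (v ∘ σ)) - (Equiv.Perm.sign σ : ℤ) • coeffFamily Q = 0 := by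
    refine eq_zero_of_familyDer_eq_zero (d := d) (N := N) (fun v j hj => ?_) ?_
    · simp [hhigh v j hj, hhigh (v ∘ σ) (σ.symm j) (by simpa using hj)]
    · ext v
      rw [map_sub, map_zsmul, Pi.sub_apply, ← familyDer_comp_perm, hskew]
      exact sub_self _
  exact congrFun (sub_eq_zero.mp hdefect) w

lemma extendZero_boxRestrict_of_mem_skewFamilies {f : (α → ℕ × ι) → F}
    (hf : f ∈ skewFamilies R F (gapIndices α ι N)) :
    extendZero (boxRestrict R F α ι (N + 1) f) = f :=
  extendZero_boxRestrict fun w hw => hf.2 w fun h => hw fun j => Nat.lt_succ_of_le (h.2 j)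

theorem mem_map_flatSolutions_iff [Nonempty α] {s : (α → Fin (N + 1)) → (α → ι) → F} :
    s ∈ (flatSolutions d α ι N).map (boxRestrict R F α ι (N + 1) ∘ₗ familyDer d) ↔
      extendZero s ∈ skewFamilies R F (gapIndices α ι N) ∧
        ∃ Q, familyDer d (coeffFamily Q) = extendZero s := by
  constructor
  · rintro ⟨f, hf, rfl⟩
    obtain ⟨Q, rfl⟩ := exists_coeffFamily_eq fun w hw => hf.1.2 w fun h => hw h.2
    have hgap := familyDer_mem_skewFamilies_gapIndices hf
    rw [LinearMap.comp_apply, extendZero_boxRestrict_of_mem_skewFamilies hgap]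
    exact ⟨hgap, Q, rfl⟩
  · rintro ⟨hs, Q, hQ⟩
    refine ⟨coeffFamily Q, coeffFamily_mem_flatSolutions_iff.mpr (hQ ▸ hs), ?_⟩
    rw [LinearMap.comp_apply, hQ, boxRestrict_extendZero]

lemma injOn_boxRestrict_comp_familyDer_flatSolutions [Nonempty α] :
    Set.InjOn (boxRestrict R F α ι (N + 1) ∘ₗ familyDer d) (flatSolutions d α ι N) := by
  rw [← LinearMap.disjoint_ker_iff_injOn, LinearMap.disjoint_ker]
  intro f hf hzero
  have hdf : familyDer d f = 0 :=
    calc familyDer d f = extendZero (boxRestrict R F α ι (N + 1) (familyDer d f)) :=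
          (extendZero_boxRestrict_of_mem_skewFamilies
            (familyDer_mem_skewFamilies_gapIndices hf)).symm
      _ = extendZero (boxRestrict R F α ι (N + 1) 0) :=
          congrArg extendZero (hzero.trans (map_zero _).symm)
      _ = 0 := extendZero_boxRestrict fun _ _ => rfl
  exact eq_zero_of_familyDer_eq_zero (fun w j hj => hf.1.2 w fun hw => (hw.2 j).not_ge hj) hdf

theorem rank_map_flatSolutions [Nonempty α] :
    Module.rank R ((flatSolutions d α ι N).map (boxRestrict R F α ι (N + 1) ∘ₗ familyDer d)) =
      Module.rank R (flatSolutions d α ι N) := by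
  rw [← LinearMap.range_domRestrict]
  exact rank_range_of_injective _
    (Set.injOn_iff_injective.mp injOn_boxRestrict_comp_familyDer_flatSolutions)

end FlatSolutions

section SkewBox

variable {R F : Type*} [CommRing R] [AddCommGroup F] [Module R F]

lemma gapOne_iff {k : ℕ} {m : Fin (k + 1) → ℕ} :
    gapOne k m ↔ ∃ p q, m p = m q + 1 ∧ ∀ i ≠ p, m i < m p := by
  constructor
  · rintro ⟨σ, hanti, hgap⟩
    refine ⟨σ 0, σ 1, hgap, σ.surjective.forall.mpr fun j hj => ?_⟩
    have hle : m (σ j) ≤ m (σ 1) := hanti (Fin.one_le_of_ne_zero fun h => hj (congrArg σ h))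
    exact hle.trans_lt (hgap ▸ Nat.lt_succ_self _)
  · rintro ⟨p, q, hpq, hp⟩
    let σ := Tuple.sort (OrderDual.toDual ∘ m)
    have hanti : Antitone (m ∘ σ) := Tuple.monotone_sort (OrderDual.toDual ∘ m)
    have hσ0 : σ 0 = p := by
      by_contra h
      exact (hp _ h).not_ge (by simpa using hanti (Fin.zero_le (σ.symm p)))
    have hone : (1 : Fin (k + 1)) ≠ 0 := by
      rw [ne_eq, Fin.one_eq_zero_iff]
      rintro ⟨⟩
      rw [Fin.subsingleton_one.elim q p] at hpq
      omega
    have hσ1 : m (σ 1) < m p := hp _ fun h => hone (σ.injective (h.trans hσ0.symm))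
    have hq0 : σ.symm q ≠ 0 := fun h => by
      rw [Equiv.symm_apply_eq, hσ0] at h
      rw [h] at hpq
      omega
    have hq : m q ≤ m (σ 1) := by simpa using hanti (Fin.one_le_of_ne_zero hq0)
    exact ⟨σ, hanti, by rw [hσ0]; omega⟩

lemma boxIndex_mem_gapIndices_iff {ι : Type*} {k N : ℕ}
    {m : Fin (k + 1) → Fin (N + 1)} {i : Fin (k + 1) → ι} :
    boxIndex (m, i) ∈ gapIndices (Fin (k + 1)) ι N ↔ gapOne k fun j => (m j : ℕ) := by
  rw [gapOne_iff]
  exact and_iff_left fun j => Nat.le_of_lt_succ (m j).isLt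

lemma extendZero_mem_skewFamilies_gapIndices_iff {ι : Type*} {k N : ℕ}
    {s : (Fin (k + 1) → Fin (N + 1)) → (Fin (k + 1) → ι) → F} :
    extendZero s ∈ skewFamilies R F (gapIndices (Fin (k + 1)) ι N) ↔
      (∀ m i, ¬ gapOne k (fun j => (m j : ℕ)) → s m i = 0) ∧
        ∀ (σ : Equiv.Perm (Fin (k + 1))) (m : Fin (k + 1) → Fin (N + 1)) (i : Fin (k + 1) → ι),
          s (fun j => m (σ j)) (fun j => i (σ j)) = (Equiv.Perm.sign σ : ℤ) • s m i := by
  constructor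
  · rintro ⟨hskew, hgap⟩
    refine ⟨fun m i hmi => ?_, fun σ m i => ?_⟩
    · rw [← extendZero_boxIndex s (m, i), hgap _ (mt boxIndex_mem_gapIndices_iff.mp hmi)]
    · rw [← extendZero_boxIndex s (m, i), ← hskew]
      exact (extendZero_boxIndex s (fun j => m (σ j), fun j => i (σ j))).symm
  · rintro ⟨hgap, hskew⟩
    refine ⟨fun σ w => ?_, fun w hw => ?_⟩ <;> by_cases hbox : ∀ j, (w j).1 < N + 1
    · obtain ⟨⟨m, i⟩, rfl⟩ := exists_boxIndex_eq_iff.mpr hbox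
      rw [extendZero_boxIndex, ← hskew]
      exact extendZero_boxIndex s (fun j => m (σ j), fun j => i (σ j))
    · have hboxσ : ¬ ∀ j, ((w ∘ σ) j).1 < N + 1 := fun h => hbox (σ.surjective.forall.mpr h)
      rw [extendZero_eq_zero s hbox, extendZero_eq_zero s hboxσ, smul_zero]
    · obtain ⟨⟨m, i⟩, rfl⟩ := exists_boxIndex_eq_iff.mpr hbox
      rw [extendZero_boxIndex, hgap _ _ (mt boxIndex_mem_gapIndices_iff.mpr hw)]
    · exact extendZero_eq_zero s hbox

end SkewBox

section DifferentialField

variable {F : Type*} [Field F] {d : F → F} {C : Subfield F}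

/-- A derivation as a linear map over its field of constants. -/
def IsDerivation.constLinearMap (hd : IsDerivation d) (hC : ∀ x : F, x ∈ C ↔ d x = 0) :
    F →ₗ[C] F where
  toFun := d
  map_add' := hd.map_add
  map_smul' c a := by
    change d (c * a) = c * d a
    rw [hd.leibniz, (hC c).mp c.2, zero_mul, zero_add]

lemma IsDerivation.exact_constLinearMap (hd : IsDerivation d) (hC : ∀ x : F, x ∈ C ↔ d x = 0) :
    Function.Exact (Algebra.linearMap C F) (hd.constLinearMap hC) :=
  fun y => (hC y).symm.trans ⟨fun hy => ⟨⟨y, hy⟩, rfl⟩, by rintro ⟨c, rfl⟩; exact c.2⟩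

lemma IsDerivation.constLinearMap_mul_mulLeft (hd : IsDerivation d)
    (hC : ∀ x : F, x ∈ C ↔ d x = 0) {x : F} (hx : d x = 1) :
    hd.constLinearMap hC * LinearMap.mulLeft C x =
      LinearMap.mulLeft C x * hd.constLinearMap hC + 1 := by
  ext y
  change d (x * y) = x * d y + y
  rw [hd.leibniz, hx, one_mul, add_comm]

theorem IsDerivation.rank_flatSolutions [CharZero F] (hd : IsDerivation d)
    (hC : ∀ x : F, x ∈ C ↔ d x = 0) (hx : ∃ x, d x = 1) (ι : Type*) [Fintype ι] [DecidableEq ι]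
    (N n : ℕ) :
    Module.rank C (flatSolutions (hd.constLinearMap hC) (Fin n) ι N) =
      (flatSubsets ι N n).card := by
  obtain ⟨x, hx⟩ := hx
  exact (rank_skewFamilies_inf_ker_add_truncLowerSum (hd.constLinearMap_mul_mulLeft hC hx)
    (fun w hw => hw.2) fun σ w => comp_perm_mem_flatIndices σ).trans
      (rank_skewFamilies_inf_ker_compLeft (algebraMap C F).injective (hd.exact_constLinearMap hC)
        (fun t ht => (mem_flatSubsets.mp ht).1.2) mem_flatIndices_iff_map_mem_flatSubsets)

lemma LinearlyClosed.exists_eq_one (hlc : LinearlyClosed d) : ∃ x, d x = 1 := by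
  obtain ⟨x, hx⟩ := (hlc 1 (fun n => n) (by simp)).1 1
  exact ⟨x, by simpa [Finset.sum_range_succ] using hx⟩

end DifferentialField

theorem stmt_13_general (F : Type*) [Field F] [CharZero F] (d : F → F) (hd : IsDerivation d)
    (hx : ∃ x, d x = 1)
    (C : Subfield F) (hC : ∀ x : F, x ∈ C ↔ d x = 0)
    (k l N : ℕ)
    (Sol : Submodule C ((Fin (k + 1) → Fin (N + 1)) → (Fin (k + 1) → Fin l) → F))
    (hSol : ∀ s : (Fin (k + 1) → Fin (N + 1)) → (Fin (k + 1) → Fin l) → F, s ∈ Sol ↔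
      ((∀ m i, ¬ gapOne k (fun j => (m j : ℕ)) → s m i = 0) ∧
       (∀ (σ : Equiv.Perm (Fin (k + 1))) (m : Fin (k + 1) → Fin (N + 1))
          (i : Fin (k + 1) → Fin l),
          s (fun j => m (σ j)) (fun j => i (σ j)) = (Equiv.Perm.sign σ : ℤ) • s m i) ∧
       (∀ i : Fin (k + 1) → Fin l,
          ∑ m : Fin (k + 1) → Fin (N + 1),
            (lamZero d)^[(m 0 : ℕ)]
              ((MvPolynomial.monomial
                  (Finsupp.equivFunOnFinite.symm fun a : Fin k => (m a.succ : ℕ)))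
                (s m i)) = 0)))
    (D : ℕ)
    (hD : (D : ℤ) = ∑ n ∈ Finset.range N,
        ((((n + 1) * l).choose (k + 1) : ℤ) - ((n * l).choose (k + 1) : ℤ)
          - (l : ℤ) * ((n * l).choose k : ℤ))) :
    Module.rank C Sol = (D : Cardinal) := by
  let der : F →ₗ[C] F := hd.constLinearMap hC
  have hmap : Sol = (flatSolutions der (Fin (k + 1)) (Fin l) N).map
      (boxRestrict C F (Fin (k + 1)) (Fin l) (N + 1) ∘ₗ familyDer der) := by
    ext s
    rw [hSol, mem_map_flatSolutions_iff, extendZero_mem_skewFamilies_gapIndices_iff, and_assoc,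
      ← forall_sum_lamZero_iterate_eq_zero_iff]
    rfl
  have hcard : (flatSubsets (Fin l) N (k + 1)).card = D := by
    zify
    rw [hD, card_flatSubsets, Fintype.card_fin]
  rw [hmap, rank_map_flatSolutions, hd.rank_flatSolutions hC hx, hcard]

/-- Let `F` be a linearly closed differential field of characteristic zero with constants
`C`.  The families `s^{m_0,…,m_k}_{i_0,…,i_k} ∈ F` indexed by `i_0,…,i_k ∈ {1,…,ℓ}` and
tuples `(m_0,…,m_k) ∈ {0,…,N}^{k+1}` whose non-increasing rearrangement satisfies
`μ_0 − μ_1 = 1`, skewsymmetric under simultaneous permutations of upper and lower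
indices, satisfying `Σ_m Λ₀^{m_0} (λ_1^{m_1}⋯λ_k^{m_k} · s^m_i) = 0` for all `i`, form a
`C`-vector space of dimension
`D = Σ_{n=0}^{N−1} (binom((n+1)ℓ, k+1) − binom(nℓ, k+1) − ℓ·binom(nℓ, k))`. -/
theorem stmt_13 (F : Type*) [Field F] [CharZero F] (d : F → F) (hd : IsDerivation d)
    (hlc : LinearlyClosed d)
    (C : Subfield F) (hC : ∀ x : F, x ∈ C ↔ d x = 0)
    (k l N : ℕ) (hk : 1 ≤ k) (hl : 0 < l) (hN : 1 ≤ N)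
    (Sol : Submodule C ((Fin (k + 1) → Fin (N + 1)) → (Fin (k + 1) → Fin l) → F))
    (hSol : ∀ s : (Fin (k + 1) → Fin (N + 1)) → (Fin (k + 1) → Fin l) → F, s ∈ Sol ↔
      ((∀ m i, ¬ gapOne k (fun j => (m j : ℕ)) → s m i = 0) ∧
       (∀ (σ : Equiv.Perm (Fin (k + 1))) (m : Fin (k + 1) → Fin (N + 1))
          (i : Fin (k + 1) → Fin l),
          s (fun j => m (σ j)) (fun j => i (σ j)) = (Equiv.Perm.sign σ : ℤ) • s m i) ∧
       (∀ i : Fin (k + 1) → Fin l,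
          ∑ m : Fin (k + 1) → Fin (N + 1),
            (lamZero d)^[(m 0 : ℕ)]
              ((MvPolynomial.monomial
                  (Finsupp.equivFunOnFinite.symm fun a : Fin k => (m a.succ : ℕ)))
                (s m i)) = 0)))
    (D : ℕ)
    (hD : (D : ℤ) = ∑ n ∈ Finset.range N,
        ((((n + 1) * l).choose (k + 1) : ℤ) - ((n * l).choose (k + 1) : ℤ)
          - (l : ℤ) * ((n * l).choose k : ℤ))) :
    Module.rank C Sol = (D : Cardinal) :=
  stmt_13_general F d hd hlc.exists_eq_one C hC k l N Sol hSol D hD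
end

section
/- Let V be a normal algebra of differential functions in ℓ < ∞ differential variables over a field of characteristic zero, and assume that the algebra of quasiconstants F ⊆ V is a field. Let K(∂) = (K_{ij}(∂)) be an ℓ×ℓ matrix differential operator of order N with quasiconstant coefficients whose leading coefficient K_N = (K_{ij,N})_{i,j} ∈ Mat_{ℓ×ℓ}(F) is invertible. Then: (a) for every k ≥ 0, ker(δ_K : Ω̃^k(V) → Ω̃^{k+1}(V)) = δ_K(Ω̃^{k−1}(V)) ⊕ Ω̃^k_{0,0} (an internal direct sum of F-subspaces, with the convention Ω̃^{−1}(V) = 0); in other words, the inclusion of the subcomplex (Ω̃•_{0,0}, 0) into (Ω̃•(V), δ_K) induces an isomorphism H^k(Ω̃•(V), δ_K) ≅ Ω̃^k_{0,0}; (b) for every k ≥ 0, H^k(Ω̃•(V), δ_K) is a vector space over F of dimension binom(Nℓ, k). -/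
/-- The structure of an algebra of differential functions in `ℓ` differential variables
on a commutative ring `V`: a derivation `∂ = pd` and pairwise commuting derivations
`∂/∂u_i^{(n)} = D i n` such that each `f ∈ V` is annihilated by all but finitely many of
the `D i n`, and `[D i n, ∂] = D i (n−1)` (zero for `n = 0`). -/
structure IsAlgDiffFun {V : Type*} [CommRing V] {l : ℕ}
    (pd : V → V) (D : Fin l → ℕ → V → V) : Prop where
  pd_add : ∀ a b : V, pd (a + b) = pd a + pd b
  pd_leibniz : ∀ a b : V, pd (a * b) = pd a * b + a * pd b
  d_add : ∀ (i : Fin l) (n : ℕ) (a b : V), D i n (a + b) = D i n a + D i n b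
  d_leibniz : ∀ (i : Fin l) (n : ℕ) (a b : V), D i n (a * b) = D i n a * b + a * D i n b
  d_comm : ∀ (i : Fin l) (n : ℕ) (j : Fin l) (m : ℕ) (f : V),
    D i n (D j m f) = D j m (D i n f)
  d_fin : ∀ f : V, {p : Fin l × ℕ | D p.1 p.2 f ≠ 0}.Finite
  comm_zero : ∀ (i : Fin l) (f : V), D i 0 (pd f) = pd (D i 0 f)
  comm_succ : ∀ (i : Fin l) (n : ℕ) (f : V),
    D i (n + 1) (pd f) = pd (D i (n + 1) f) + D i n f

/-- Apply a map `f` to all the coefficients of a polynomial. -/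
noncomputable def coeffMap {V : Type*} [CommRing V] {k : ℕ} (f : V → V)
    (Q : MvPolynomial (Fin k) V) : MvPolynomial (Fin k) V :=
  ∑ m ∈ Q.support, (MvPolynomial.monomial m) (f (MvPolynomial.coeff m Q))

/-- The polynomial `(λ_α + ∂)^n K_{j,i'}(λ_α) = Σ_m Σ_{p=0}^n binom(n,p) (∂^p K_{j,i',m})
λ_α^{n−p+m}`, where `K_{j,i'}(∂) = Σ_{m=0}^N K_{j,i',m} ∂^m`. -/
noncomputable def kFactor {V : Type*} [CommRing V] {l : ℕ} (pd : V → V)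
    (N : ℕ) (Kc : Fin l → Fin l → ℕ → V) (n : ℕ) (j i' : Fin l) {k : ℕ} (α : Fin k) :
    MvPolynomial (Fin k) V :=
  ∑ m ∈ Finset.range (N + 1), ∑ p ∈ Finset.range (n + 1),
    (MvPolynomial.monomial (Finsupp.single α (n - p + m)))
      ((n.choose p : V) * pd^[p] (Kc j i' m))

/-- The map `δ_K : Ω̃^k(V) → Ω̃^{k+1}(V)`:
`(δ_K P)_{i_0,…,i_k}(λ_0,…,λ_k) = Σ_α (−1)^α Σ_j Σ_n
(∂ P_{i_0,…,î_α,…,i_k}(λ_0,…,λ̂_α,…,λ_k)/∂u_j^{(n)}) ((λ_α+∂)^n K_{j,i_α}(λ_α))`. -/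
noncomputable def deltaK {V : Type*} [CommRing V] {l : ℕ} (pd : V → V)
    (D : Fin l → ℕ → V → V) (N : ℕ) (Kc : Fin l → Fin l → ℕ → V) {k : ℕ}
    (P : (Fin k → Fin l) → MvPolynomial (Fin k) V) :
    (Fin (k + 1) → Fin l) → MvPolynomial (Fin (k + 1)) V :=
  fun i => ∑ α : Fin (k + 1), (-1 : ℤ) ^ (α : ℕ) •
    ∑ j : Fin l, ∑ᶠ n : ℕ,
      coeffMap (D j n) (MvPolynomial.rename α.succAbove (P (fun b => i (α.succAbove b))))
        * kFactor pd N Kc n j (i α) α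

/-- An array `P ∈ Ω̃^k(V)` is skewsymmetric if it is skewsymmetric with respect to
simultaneous permutations of the variables `λ_1,…,λ_k` and the indices `i_1,…,i_k`. -/
def OmegaSkew {V : Type*} [CommRing V] {l k : ℕ}
    (P : (Fin k → Fin l) → MvPolynomial (Fin k) V) : Prop :=
  ∀ (σ : Equiv.Perm (Fin k)) (i : Fin k → Fin l),
    MvPolynomial.rename σ (P (fun a => i (σ a))) = (Equiv.Perm.sign σ : ℤ) • P i

/-- The action of `∂` on `Ω̃^k(V)`:
`(∂P)_{i_1,…,i_k}(λ_1,…,λ_k) = (∂ + λ_1 + ⋯ + λ_k) P_{i_1,…,i_k}(λ_1,…,λ_k)` with `∂`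
applied to the coefficients. -/
noncomputable def bigD {V : Type*} [CommRing V] {l k : ℕ} (pd : V → V)
    (P : (Fin k → Fin l) → MvPolynomial (Fin k) V) :
    (Fin k → Fin l) → MvPolynomial (Fin k) V :=
  fun i => (∑ a : Fin k, MvPolynomial.X a) * P i + coeffMap pd (P i)

/-- Membership in the subspace `V_{m,i} = {f : ∂f/∂u_j^{(n)} = 0 whenever (n,j) > (m,i)
in the lexicographic order}`. -/
def memVmi {V : Type*} [CommRing V] {l : ℕ} (D : Fin l → ℕ → V → V) (m : ℕ) (i : Fin l) (f : V) : Prop :=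
  ∀ (n : ℕ) (j : Fin l), (m < n ∨ (m = n ∧ i < j)) → D j n f = 0

/-- An algebra of differential functions is normal if `∂/∂u_i^{(m)} (V_{m,i}) = V_{m,i}`
for all `m, i`. -/
def IsNormalADF {V : Type*} [CommRing V] {l : ℕ} (D : Fin l → ℕ → V → V) : Prop :=
  ∀ (m : ℕ) (i : Fin l) (f : V), memVmi D m i f → ∃ g, memVmi D m i g ∧ D i m g = f


/-!
Let `F` be the ring of quasiconstants. The coefficients of `λ_1^{r_1} ⋯ λ_k^{r_k}` in the entries of
an array are indexed by pairs `(i, r)`, which label a basis of the free `F`-module `F^l[λ]`. A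
skewsymmetric array is thus an alternating map on `F^l[λ]` with values in `V`, and `δ_K` becomes the
Koszul differential of a commuting family of operators on `V`.

In the basis of `F^l[λ]` normalized by `K_N⁻¹` and ordered lexicographically, the operator at
position `(N + n, j)` is `∂/∂u_j^{(n)}` on functions not depending on the jets of order above `n`.
The common kernels of the operators from some position on are therefore the spaces `V_{n,j}`, and
normality says that each operator is onto on the kernel of the later ones. By Cartan's formula one
can then modify a cocycle by coboundaries, going down one position at a time, until all arguments
from position `N l` on are killed and all values are quasiconstants. On such alternating maps the
differential is zero, and those of degree `k` are the alternating forms on a free module of rank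
`N l`.
-/

section KoszulComplex

open AlternatingMap (curryLeft curryLeft_apply_apply)

variable {F M V W : Type*} [CommRing F] [AddCommGroup M] [Module F M] [AddCommGroup V] [Module F V]
  [AddCommGroup W] [Module F W] {k : ℕ}

/-- The action of `M` through `T` on the values of alternating maps, curried as the integrand of
the Koszul differential. -/
def koszulAction (T : M →ₗ[F] Module.End F V) :
    M [⋀^Fin k]→ₗ[F] V →ₗ[F] M →ₗ[F] M [⋀^Fin k]→ₗ[F] V :=
  LinearMap.mk₂ F (fun c x => (T x).compAlternatingMap c) (by intros; ext; simp)
    (by intros; ext; simp) (by intros; ext; simp) (by intros; ext; simp)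

/-- The Koszul differential `(d c)(x₀,…,x_k) = Σ_i (-1)^i T(x_i) c(x₀,…,x̂_i,…,x_k)` on alternating
maps with values in `V`, i.e. the Chevalley–Eilenberg differential of `M` seen as an abelian Lie
algebra acting on `V` through `T`. The commutativity of the action is not part of the definition. -/
def koszulDiff (T : M →ₗ[F] Module.End F V) :
    M [⋀^Fin k]→ₗ[F] V →ₗ[F] M [⋀^Fin (k + 1)]→ₗ[F] V :=
  AlternatingMap.alternatizeUncurryFinLM ∘ₗ koszulAction T

theorem koszulDiff_apply (T : M →ₗ[F] Module.End F V) (c : M [⋀^Fin k]→ₗ[F] V)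
    (m : Fin (k + 1) → M) :
    koszulDiff T c m =
      ∑ i : Fin (k + 1), (-1 : ℤ) ^ (i : ℕ) • T (m i) (c fun j => m (i.succAbove j)) :=
  AlternatingMap.alternatizeUncurryFin_apply _ _

theorem koszulDiff_koszulDiff {T : M →ₗ[F] Module.End F V} (hT : ∀ x y, Commute (T x) (T y))
    (c : M [⋀^Fin k]→ₗ[F] V) : koszulDiff T (koszulDiff T c) = 0 := by
  let f : M →ₗ[F] M →ₗ[F] M [⋀^Fin k]→ₗ[F] V := koszulAction T ∘ₗ koszulAction T c
  have hf (x y) : f x y = f y x := by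
    ext m
    exact LinearMap.congr_fun (hT y x).eq (c m)
  have hcomp : koszulAction T (koszulDiff T c) = AlternatingMap.alternatizeUncurryFinLM ∘ₗ f := by
    ext x m
    change T x (koszulDiff T c m) = koszulDiff T ((T x).compAlternatingMap c) m
    simp only [koszulDiff_apply, map_sum, map_zsmul, LinearMap.compAlternatingMap_apply]
    exact Finset.sum_congr rfl fun i _ =>
      congrArg _ (LinearMap.congr_fun (hT x (m i)).eq (c fun j => m (i.succAbove j)))
  exact (congrArg _ hcomp).trans
    (AlternatingMap.alternatizeUncurryFin_alternatizeUncurryFinLM_comp_of_symmetric hf)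

theorem curryLeft_koszulDiff_zero (T : M →ₗ[F] Module.End F V) (c : M [⋀^Fin 0]→ₗ[F] V) (x : M) :
    curryLeft (koszulDiff T c) x = (T x).compAlternatingMap c := by
  ext m
  simp only [curryLeft_apply_apply, koszulDiff_apply, LinearMap.compAlternatingMap_apply]
  simp [Subsingleton.elim _ m]

/-- Cartan's formula `ι_x d + d ι_x = T x`, solved for `ι_x d`. -/
theorem curryLeft_koszulDiff_succ (T : M →ₗ[F] Module.End F V) (c : M [⋀^Fin (k + 1)]→ₗ[F] V)
    (x : M) : curryLeft (koszulDiff T c) x =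
      (T x).compAlternatingMap c - koszulDiff T (curryLeft c x) := by
  ext m
  simp only [curryLeft_apply_apply, koszulDiff_apply, AlternatingMap.sub_apply,
    LinearMap.compAlternatingMap_apply]
  rw [Fin.sum_univ_succ, sub_eq_add_neg, ← Finset.sum_neg_distrib]
  congr 1
  · simp
  · refine Finset.sum_congr rfl fun i _ => ?_
    have hcons : (fun j => Matrix.vecCons x m (i.succ.succAbove j)) =
        Matrix.vecCons x fun j => m (i.succAbove j) := by
      ext j
      cases j using Fin.cases <;> simp
    simp [hcons, pow_succ]

theorem compAlternatingMap_eq_zero_of_curryLeft_eq_zero {T : M →ₗ[F] Module.End F V}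
    {c : M [⋀^Fin (k + 1)]→ₗ[F] V} {x : M} (hc : curryLeft c x = 0)
    (hdc : curryLeft (koszulDiff T c) x = 0) : (T x).compAlternatingMap c = 0 := by
  rwa [curryLeft_koszulDiff_succ, hc, map_zero, sub_zero] at hdc

/-- The alternating maps that vanish as soon as one of their arguments lies in `U`; the name is the
one used for differential forms killed by the contractions along a subspace. -/
def horizontal (k : ℕ) (V : Type*) [AddCommGroup V] [Module F V] (U : Submodule F M) :
    Submodule F (M [⋀^Fin k]→ₗ[F] V) where
  carrier := {c | ∀ m, (∃ i, m i ∈ U) → c m = 0}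
  add_mem' hc he m hm := by rw [AlternatingMap.add_apply, hc m hm, he m hm, add_zero]
  zero_mem' _ _ := rfl
  smul_mem' r c hc m hm := by rw [AlternatingMap.smul_apply, hc m hm, smul_zero]

theorem horizontal_anti {U U' : Submodule F M} (h : U ≤ U') :
    horizontal k V U' ≤ horizontal k V U :=
  fun _ hc m hm => hc m (hm.imp fun _ hi => h hi)

theorem compAlternatingMap_mem_horizontal {U : Submodule F M} {c : M [⋀^Fin k]→ₗ[F] V}
    (hc : c ∈ horizontal k V U) (g : V →ₗ[F] W) : g.compAlternatingMap c ∈ horizontal k W U :=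
  fun m hm => by rw [LinearMap.compAlternatingMap_apply, hc m hm, map_zero]

theorem mem_horizontal_span_iff {X : Set M} {c : M [⋀^Fin k]→ₗ[F] V} :
    c ∈ horizontal k V (Submodule.span F X) ↔ ∀ m, (∃ i, m i ∈ X) → c m = 0 := by
  refine ⟨fun hc m ⟨i, hi⟩ => hc m ⟨i, Submodule.subset_span hi⟩, fun hc m ⟨i, hi⟩ => ?_⟩
  have hX : X ⊆ LinearMap.ker (c.toMultilinearMap.toLinearMap m i) := fun x hx =>
    hc _ ⟨i, by simpa using hx⟩
  simpa using Submodule.span_le.2 hX hi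

theorem mem_horizontal_succ_iff {U : Submodule F M} {c : M [⋀^Fin (k + 1)]→ₗ[F] V} :
    c ∈ horizontal (k + 1) V U ↔ U ≤ LinearMap.ker (curryLeft c) := by
  constructor
  · exact fun hc x hx =>
      LinearMap.mem_ker.2 <| AlternatingMap.ext fun m => hc _ ⟨0, by simpa using hx⟩
  · rintro h m ⟨i, hi⟩
    have hfront := c.neg_one_pow_smul_map_insertNth i (m i) (i.removeNth m)
    rw [Fin.insertNth_self_removeNth, ← curryLeft_apply_apply, LinearMap.mem_ker.1 (h hi)] at hfront
    exact (isUnit_neg_one.pow (i : ℕ)).smul_eq_zero.1 hfront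

theorem curryLeft_koszulDiff_of_mem_horizontal (T : M →ₗ[F] Module.End F V) {U : Submodule F M}
    {c : M [⋀^Fin k]→ₗ[F] V} (hc : c ∈ horizontal k V U) {x : M} (hx : x ∈ U) :
    curryLeft (koszulDiff T c) x = (T x).compAlternatingMap c := by
  cases k with
  | zero => exact curryLeft_koszulDiff_zero T c x
  | succ k =>
    rw [curryLeft_koszulDiff_succ, LinearMap.mem_ker.1 (mem_horizontal_succ_iff.1 hc hx), map_zero,
      sub_zero]

end KoszulComplex

section HorizontalBasis

variable {F M V W J : Type*} [CommRing F] [AddCommGroup M] [Module F M] [AddCommGroup V]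
  [Module F V] [AddCommGroup W] [Module F W] {k : ℕ} (B : Module.Basis J F M) (S : Set J)

theorem forall_mem_of_forall_basis_mem {P : Submodule F V} {c : M [⋀^Fin k]→ₗ[F] V}
    (h : ∀ a : Fin k → J, c (fun i => B (a i)) ∈ P) (m : Fin k → M) : c m ∈ P := by
  have hquot : P.mkQ.compAlternatingMap c = 0 := Module.Basis.ext_alternating B fun a _ =>
    (Submodule.Quotient.mk_eq_zero P).2 (h a)
  exact (Submodule.Quotient.mk_eq_zero P).1 (DFunLike.congr_fun hquot m)

open Classical in
/-- The projection of `M` that kills the basis vectors indexed by `S` and fixes the others. -/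
noncomputable def killBasis : M →ₗ[F] M :=
  B.constr F fun j => if j ∈ S then 0 else B j

theorem killBasis_of_mem {j : J} (hj : j ∈ S) : killBasis B S (B j) = 0 := by
  rw [killBasis, Module.Basis.constr_basis, if_pos hj]

theorem killBasis_of_notMem {j : J} (hj : j ∉ S) : killBasis B S (B j) = B j := by
  rw [killBasis, Module.Basis.constr_basis, if_neg hj]

theorem compLinearMap_killBasis_mem_horizontal (c : M [⋀^Fin k]→ₗ[F] V) :
    c.compLinearMap (killBasis B S) ∈ horizontal k V (Submodule.span F (B '' S)) := by
  rw [mem_horizontal_span_iff]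
  rintro m ⟨i, j, hj, hm⟩
  exact c.map_coord_zero i (by rw [← hm, killBasis_of_mem B S hj])

variable {S}

theorem compLinearMap_killBasis_eq_self {c : M [⋀^Fin k]→ₗ[F] V}
    (hc : ∀ a : Fin k → J, (∃ i, a i ∈ S) → c (fun i => B (a i)) = 0) :
    c.compLinearMap (killBasis B S) = c := by
  refine Module.Basis.ext_alternating B fun a _ => ?_
  by_cases ha : ∃ i, a i ∈ S
  · rw [hc a ha]
    obtain ⟨i, hi⟩ := ha
    exact c.map_coord_zero i (killBasis_of_mem B S hi)
  · push Not at ha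
    simp only [AlternatingMap.compLinearMap_apply, killBasis_of_notMem B S (ha _)]

theorem mem_horizontal_basis_iff {c : M [⋀^Fin k]→ₗ[F] V} :
    c ∈ horizontal k V (Submodule.span F (B '' S)) ↔
      ∀ a : Fin k → J, (∃ i, a i ∈ S) → c (fun i => B (a i)) = 0 := by
  refine ⟨fun hc a ⟨i, hi⟩ => hc _ ⟨i, Submodule.subset_span ⟨_, hi, rfl⟩⟩, fun hc => ?_⟩
  rw [← compLinearMap_killBasis_eq_self B hc]
  exact compLinearMap_killBasis_mem_horizontal B S c

/-- Exterior powers of free modules are projective, so alternating maps lift through surjections. -/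
theorem exists_horizontal_compAlternatingMap_eq (g : W →ₗ[F] V) {c : M [⋀^Fin k]→ₗ[F] V}
    (hc : c ∈ horizontal k V (Submodule.span F (B '' S))) (hg : ∀ m, c m ∈ LinearMap.range g) :
    ∃ e ∈ horizontal k W (Submodule.span F (B '' S)), g.compAlternatingMap e = c := by
  have := Module.Free.of_basis B
  obtain ⟨h, hh⟩ := Module.projective_lifting_property g.rangeRestrict
    (exteriorPower.alternatingMapLinearEquiv (c.codRestrict _ hg)) g.surjective_rangeRestrict
  refine ⟨_, compLinearMap_killBasis_mem_horizontal B S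
    (h.compAlternatingMap (exteriorPower.ιMulti F k)), ?_⟩
  rw [← compLinearMap_killBasis_eq_self B ((mem_horizontal_basis_iff B).1 hc)]
  ext m
  have hm := congrArg Subtype.val (LinearMap.congr_fun hh
    (exteriorPower.ιMulti F k fun i => killBasis B S (m i)))
  rwa [exteriorPower.alternatingMapLinearEquiv_apply_ιMulti] at hm

theorem exists_horizontal_compAlternatingMap_eq_of_surjOn {g : W →ₗ[F] V} {P : Submodule F W}
    {Q : Submodule F V} (hg : Set.SurjOn g P Q) {c : M [⋀^Fin k]→ₗ[F] V}
    (hc : c ∈ horizontal k V (Submodule.span F (B '' S))) (hcQ : ∀ m, c m ∈ Q) :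
    ∃ e ∈ horizontal k W (Submodule.span F (B '' S)),
      (∀ m, e m ∈ P) ∧ g.compAlternatingMap e = c := by
  obtain ⟨e, he, hge⟩ := exists_horizontal_compAlternatingMap_eq B (g ∘ₗ P.subtype) hc fun m => by
    obtain ⟨w, hw, hwm⟩ := hg (hcQ m)
    exact ⟨⟨w, hw⟩, hwm⟩
  exact ⟨P.subtype.compAlternatingMap e, compAlternatingMap_mem_horizontal he _,
    fun m => (e m).2, hge⟩

theorem rank_alternatingMap_finsupp [Nontrivial F] [Fintype J] :
    Module.rank F ((J →₀ F) [⋀^Fin k]→ₗ[F] F) = ((Fintype.card J).choose k : Cardinal) := by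
  rw [exteriorPower.alternatingMapLinearEquiv.rank_eq, ← Module.finrank_eq_rank,
    Module.finrank_linearMap, exteriorPower.finrank_eq, Module.finrank_finsupp_self,
    Module.finrank_self, mul_one]

end HorizontalBasis

section HorizontalRank

variable {F M J : Type*} [CommRing F] [Nontrivial F] [AddCommGroup M] [Module F M] {k : ℕ}

open Classical in
theorem rank_horizontal (B : Module.Basis J F M) (S : Set J) [Finite ↥Sᶜ] :
    Module.rank F (horizontal k F (Submodule.span F (B '' S))) =
      ((Nat.card ↥Sᶜ).choose k : Cardinal) := by
  have := Fintype.ofFinite ↥Sᶜ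
  let r : M →ₗ[F] ↥Sᶜ →₀ F :=
    B.constr F fun j => if h : j ∈ S then 0 else Finsupp.single ⟨j, h⟩ 1
  let s : (↥Sᶜ →₀ F) →ₗ[F] M := Finsupp.linearCombination F fun j => B j
  have hrS {j : J} (hj : j ∈ S) : r (B j) = 0 := by simp [r, hj]
  have hrs : r ∘ₗ s = LinearMap.id := by
    ext1 j
    ext1
    simpa [r, s] using fun hj : (j : J) ∈ S => absurd hj j.2
  have hsr : s ∘ₗ r = killBasis B S := by
    refine B.ext fun j => ?_
    by_cases hj : j ∈ S
    · rw [LinearMap.comp_apply, hrS hj, map_zero, killBasis_of_mem B S hj]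
    · simp [r, s, hj, killBasis_of_notMem B S hj]
  let e : (↥Sᶜ →₀ F) [⋀^Fin k]→ₗ[F] F ≃ₗ[F] horizontal k F (Submodule.span F (B '' S)) :=
    { toFun := fun c => ⟨c.compLinearMap r, mem_horizontal_span_iff.2 <| by
        rintro m ⟨i, j, hj, hm⟩
        exact c.map_coord_zero i (by rw [← hm, hrS hj])⟩
      map_add' := fun _ _ => rfl
      map_smul' := fun _ _ => rfl
      invFun := fun c => (c : M [⋀^Fin k]→ₗ[F] F).compLinearMap s
      left_inv := fun c => AlternatingMap.ext fun m =>
        congrArg c (funext fun i => LinearMap.congr_fun hrs (m i))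
      right_inv := fun c => Subtype.ext <| by
        refine Eq.trans ?_ (compLinearMap_killBasis_eq_self B ((mem_horizontal_basis_iff B).1 c.2))
        rw [← hsr]
        rfl }
  have hrank := e.lift_rank_eq
  rwa [rank_alternatingMap_finsupp, ← Nat.card_eq_fintype_card, Cardinal.lift_natCast, eq_comm,
    Cardinal.lift_eq_nat_iff] at hrank

end HorizontalRank
section TailReduction

open AlternatingMap (curryLeft)

variable {F M V : Type*} [CommRing F] [AddCommGroup M] [Module F M] [AddCommGroup V] [Module F V]
  {k : ℕ} (T : M →ₗ[F] Module.End F V) (β : Module.Basis ℕ F M)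

/-- The common kernel of the operators attached to the basis vectors of index at least `q`. -/
noncomputable def tailKer (q : ℕ) : Submodule F V :=
  ⨅ r ∈ Set.Ici q, LinearMap.ker (T (β r))

/-- The span of the basis vectors of index at least `q`. -/
noncomputable def tailSpan (q : ℕ) : Submodule F M :=
  Submodule.span F (β '' Set.Ici q)

variable {T β}

theorem mem_tailKer {q : ℕ} {f : V} : f ∈ tailKer T β q ↔ ∀ r ≥ q, T (β r) f = 0 := by
  simp [tailKer]

theorem mem_tailKer_of_mem_succ {q : ℕ} {f : V} (hf : f ∈ tailKer T β (q + 1))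
    (hq : T (β q) f = 0) : f ∈ tailKer T β q :=
  mem_tailKer.2 fun r hr => hr.eq_or_lt.elim (fun h => h ▸ hq) (mem_tailKer.1 hf r)

theorem tailKer_mono : Monotone (tailKer T β) :=
  fun _ _ h _ hf => mem_tailKer.2 fun r hr => mem_tailKer.1 hf r (h.trans hr)

theorem tailSpan_anti : Antitone (tailSpan β) :=
  fun _ _ h => Submodule.span_mono (Set.image_mono (Set.Ici_subset_Ici.2 h))

theorem apply_mem_tailKer (hT : ∀ x y, Commute (T x) (T y)) {q : ℕ} {f : V}
    (hf : f ∈ tailKer T β q) (x : M) : T x f ∈ tailKer T β q :=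
  mem_tailKer.2 fun r hr => by
    rw [← Module.End.mul_apply, (hT (β r) x).eq, Module.End.mul_apply, mem_tailKer.1 hf r hr,
      map_zero]

theorem koszulDiff_apply_mem_tailKer (hT : ∀ x y, Commute (T x) (T y)) {q : ℕ}
    {c : M [⋀^Fin k]→ₗ[F] V} (hc : ∀ m, c m ∈ tailKer T β q) (m : Fin (k + 1) → M) :
    koszulDiff T c m ∈ tailKer T β q := by
  rw [koszulDiff_apply]
  exact sum_mem fun i _ => zsmul_mem (apply_mem_tailKer hT (hc _) _) _

theorem curryLeft_mem_horizontal_tailSpan {q : ℕ} {c : M [⋀^Fin (k + 1)]→ₗ[F] V}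
    (hc : c ∈ horizontal (k + 1) V (tailSpan β (q + 1))) :
    curryLeft c (β q) ∈ horizontal k V (tailSpan β q) := by
  refine mem_horizontal_span_iff.2 ?_
  rintro m ⟨i, r, hr, hm⟩
  rcases (Set.mem_Ici.1 hr).eq_or_lt with rfl | hqr
  · exact c.map_eq_zero_of_eq _ (by simp [hm]) (Fin.succ_ne_zero i).symm
  · exact hc _ ⟨i.succ, Submodule.subset_span ⟨r, hqr, by simpa using hm⟩⟩

theorem exists_mem_tailKer_of_mem_horizontal (hex : ∀ f, ∃ q, f ∈ tailKer T β q) {q : ℕ}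
    {c : M [⋀^Fin k]→ₗ[F] V} (hc : c ∈ horizontal k V (tailSpan β q)) :
    ∃ r, ∀ m, c m ∈ tailKer T β r := by
  choose stage hstage using hex
  obtain ⟨r, hr⟩ := Finite.exists_le fun a : Fin k → Fin q => stage (c fun i => β (a i))
  refine ⟨r, forall_mem_of_forall_basis_mem β fun a => ?_⟩
  by_cases ha : ∃ i, q ≤ a i
  · rw [(mem_horizontal_basis_iff β).1 hc a ha]
    exact zero_mem _
  · push Not at ha
    exact tailKer_mono (hr fun i => ⟨a i, ha i⟩) (hstage _)

/-- If `d c` is killed by the contraction with `β q`, then so is `c - d e` as soon as `e` solves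
`T (β q) e = ι_{β q} c`. -/
theorem exists_sub_koszulDiff_of_tail_succ (hT : ∀ x y, Commute (T x) (T y)) {q : ℕ}
    (hsurj : Set.SurjOn (T (β q)) (tailKer T β (q + 1)) (tailKer T β (q + 1)))
    {c : M [⋀^Fin (k + 1)]→ₗ[F] V} (hc : c ∈ horizontal (k + 1) V (tailSpan β (q + 1)))
    (hcker : ∀ m, c m ∈ tailKer T β (q + 1)) (hdc : curryLeft (koszulDiff T c) (β q) = 0) :
    ∃ e ∈ horizontal k V (tailSpan β q),
      c - koszulDiff T e ∈ horizontal (k + 1) V (tailSpan β q) ∧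
        ∀ m, (c - koszulDiff T e) m ∈ tailKer T β q := by
  obtain ⟨e, he, heker, hTe⟩ := exists_horizontal_compAlternatingMap_eq_of_surjOn β hsurj
    (curryLeft_mem_horizontal_tailSpan hc) fun m => hcker (Matrix.vecCons (β q) m)
  have hcurry {r : ℕ} (hr : q ≤ r) : curryLeft c (β r) = curryLeft (koszulDiff T e) (β r) := by
    rw [curryLeft_koszulDiff_of_mem_horizontal T he (Submodule.subset_span ⟨r, hr, rfl⟩)]
    rcases hr.eq_or_lt with rfl | hqr
    · exact hTe.symm
    · rw [mem_horizontal_succ_iff.1 hc (Submodule.subset_span ⟨r, hqr, rfl⟩)]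
      exact (AlternatingMap.ext fun m => mem_tailKer.1 (heker m) r hqr).symm
  have hsub {r : ℕ} (hr : q ≤ r) : curryLeft (c - koszulDiff T e) (β r) = 0 :=
    sub_eq_zero.2 (hcurry hr)
  have hTsub : (T (β q)).compAlternatingMap (c - koszulDiff T e) = 0 :=
    compAlternatingMap_eq_zero_of_curryLeft_eq_zero (hsub le_rfl) <| by
      rwa [map_sub (koszulDiff T), koszulDiff_koszulDiff hT, sub_zero]
  refine ⟨e, he, mem_horizontal_succ_iff.2 (Submodule.span_le.2 ?_), fun m => ?_⟩
  · rintro _ ⟨r, hr, rfl⟩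
    exact hsub hr
  · exact mem_tailKer_of_mem_succ
      (sub_mem (hcker m) (koszulDiff_apply_mem_tailKer hT heker m)) (DFunLike.congr_fun hTsub m)

theorem apply_mem_tailKer_of_koszulDiff_mem_horizontal {q : ℕ} {c : M [⋀^Fin 0]→ₗ[F] V}
    (hdc : koszulDiff T c ∈ horizontal 1 V (tailSpan β q)) (m : Fin 0 → M) :
    c m ∈ tailKer T β q := by
  refine mem_tailKer.2 fun r hr => ?_
  have hr := mem_horizontal_succ_iff.1 hdc (Submodule.subset_span ⟨r, hr, rfl⟩)
  rw [LinearMap.mem_ker, curryLeft_koszulDiff_zero] at hr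
  exact DFunLike.congr_fun hr m

theorem exists_sub_koszulDiff_mem_horizontal (hT : ∀ x y, Commute (T x) (T y)) {q r : ℕ}
    (hsurj : ∀ p ≥ q, Set.SurjOn (T (β p)) (tailKer T β (p + 1)) (tailKer T β (p + 1)))
    (hex : ∀ f, ∃ p, f ∈ tailKer T β p) {c : M [⋀^Fin (k + 1)]→ₗ[F] V}
    (hc : c ∈ horizontal (k + 1) V (tailSpan β r))
    (hdc : koszulDiff T c ∈ horizontal (k + 2) V (tailSpan β q)) :
    ∃ p, ∃ e ∈ horizontal k V (tailSpan β p),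
      c - koszulDiff T e ∈ horizontal (k + 1) V (tailSpan β q) ∧
        ∀ m, (c - koszulDiff T e) m ∈ tailKer T β q := by
  obtain ⟨s, hs⟩ := exists_mem_tailKer_of_mem_horizontal hex hc
  replace hc := horizontal_anti (tailSpan_anti (β := β) (le_max_left r (max s q))) hc
  replace hs m := tailKer_mono ((le_max_left s q).trans (le_max_right r _)) (hs m)
  have hq := (le_max_right s q).trans (le_max_right r _)
  generalize max r (max s q) = p at hc hs hq
  induction p, hq using Nat.le_induction generalizing c with
  | base => exact ⟨q, 0, zero_mem _, by simpa using hc, by simpa using hs⟩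
  | succ p hqp ih =>
    obtain ⟨e, he, hce, hceker⟩ := exists_sub_koszulDiff_of_tail_succ hT (hsurj p hqp) hc hs
      (mem_horizontal_succ_iff.1 hdc (Submodule.subset_span ⟨p, hqp, rfl⟩))
    obtain ⟨p', e', he', hce', hceker'⟩ := ih
      (by rwa [map_sub (koszulDiff T), koszulDiff_koszulDiff hT, sub_zero]) hce hceker
    have hadd : c - koszulDiff T (e + e') = c - koszulDiff T e - koszulDiff T e' := by
      rw [map_add (koszulDiff T), sub_sub]
    refine ⟨max p p', e + e', add_mem ?_ ?_, hadd ▸ hce', hadd ▸ hceker'⟩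
    · exact horizontal_anti (tailSpan_anti (le_max_left p p')) he
    · exact horizontal_anti (tailSpan_anti (le_max_right p p')) he'

end TailReduction

section AlternatingOfBasis

variable {F M V J : Type*} [CommRing F] [AddCommGroup M] [Module F M] [AddCommGroup V] [Module F V]
  {k : ℕ}

theorem exists_alternatingMap_basis_eq (htwo : ∀ x : V, x + x = 0 → x = 0)
    (B : Module.Basis J F M) {c : (Fin k → J) → V}
    (hc : ∀ (σ : Equiv.Perm (Fin k)) a, c (fun i => a (σ i)) = (Equiv.Perm.sign σ : ℤ) • c a) :
    ∃ w : M [⋀^Fin k]→ₗ[F] V, ∀ a, w (fun i => B (a i)) = c a := by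
  let w : MultilinearMap F (fun _ : Fin k => M) V :=
    PiTensorProduct.lift.symm ((Basis.piTensorProduct fun _ => B).constr F c)
  have hw (a : Fin k → J) : w (fun i => B (a i)) = c a := by
    simp only [w, PiTensorProduct.lift_symm, LinearMap.compMultilinearMap_apply,
      ← Basis.piTensorProduct_apply (fun _ => B) a, Module.Basis.constr_basis]
  have hskew (σ : Equiv.Perm (Fin k)) : w.domDomCongr σ = (Equiv.Perm.sign σ : ℤ) • w :=
    Module.Basis.ext_multilinear (fun _ => B) fun a => by
      rw [MultilinearMap.domDomCongr_apply, _root_.smul_apply, hw, hw, hc]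
  refine ⟨{ w with map_eq_zero_of_eq' := fun m i j hm hij => htwo _ ?_ }, hw⟩
  have hswap : (fun b => m (Equiv.swap i j b)) = m := by
    ext1 b
    obtain rfl | hi := eq_or_ne b i
    · rw [Equiv.swap_apply_left, hm]
    · obtain rfl | hj := eq_or_ne b j
      · rw [Equiv.swap_apply_right, hm]
      · rw [Equiv.swap_apply_of_ne_of_ne hi hj]
  have hneg := DFunLike.congr_fun (hskew (Equiv.swap i j)) m
  rw [MultilinearMap.domDomCongr_apply, hswap, _root_.smul_apply, Equiv.Perm.sign_swap hij,
    Units.val_neg, Units.val_one, neg_one_smul] at hneg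
  exact add_eq_zero_iff_eq_neg.2 hneg

end AlternatingOfBasis

section PolyArray

open MvPolynomial

variable {V : Type*} [CommRing V] {l k : ℕ}

/-- Arrays of polynomials `P_{i_1,…,i_k}(λ_1,…,λ_k)`, not necessarily skewsymmetric. -/
abbrev PolyArray (V : Type*) [CommRing V] (l k : ℕ) :=
  (Fin k → Fin l) → MvPolynomial (Fin k) V

/-- The coefficients of an array, indexed so that `a = ((i_1, r_1), …, (i_k, r_k))` stands for the
coefficient of `λ_1^{r_1} ⋯ λ_k^{r_k}` in `P_{i_1,…,i_k}`. -/
noncomputable def arrayCoeff : PolyArray V l k →ₗ[V] (Fin k → Fin l × ℕ) → V where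
  toFun P a := coeff (Finsupp.equivFunOnFinite.symm fun i => (a i).2) (P fun i => (a i).1)
  map_add' _ _ := by ext; simp
  map_smul' _ _ := by ext; simp

theorem arrayCoeff_apply (P : PolyArray V l k) (a : Fin k → Fin l × ℕ) : arrayCoeff P a =
    coeff (Finsupp.equivFunOnFinite.symm fun i => (a i).2) (P fun i => (a i).1) :=
  rfl

theorem coeff_eq_arrayCoeff (P : PolyArray V l k) (i : Fin k → Fin l) (m : Fin k →₀ ℕ) :
    coeff m (P i) = arrayCoeff P fun b => (i b, m b) := by
  rw [arrayCoeff_apply]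
  congr 1
  ext
  rfl

theorem arrayCoeff_injective :
    Function.Injective (arrayCoeff : PolyArray V l k → (Fin k → Fin l × ℕ) → V) := by
  intro P Q h
  ext i m
  rw [coeff_eq_arrayCoeff, coeff_eq_arrayCoeff, h]

theorem coeff_rename_perm (σ : Equiv.Perm (Fin k)) (P : PolyArray V l k) (i : Fin k → Fin l)
    (m : Fin k →₀ ℕ) :
    coeff m (rename σ (P fun b => i (σ b))) = arrayCoeff P fun b => (i (σ b), m (σ b)) := by
  have hm : m = Finsupp.mapDomain σ (Finsupp.equivFunOnFinite.symm fun b => m (σ b)) := by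
    ext b
    obtain ⟨b, rfl⟩ := σ.surjective b
    rw [Finsupp.mapDomain_apply σ.injective, Finsupp.equivFunOnFinite_symm_apply_apply]
  conv_lhs => rw [hm]
  rw [coeff_rename_mapDomain _ σ.injective, arrayCoeff_apply]

theorem omegaSkew_iff_arrayCoeff (P : PolyArray V l k) :
    OmegaSkew P ↔ ∀ (σ : Equiv.Perm (Fin k)) a,
      arrayCoeff P (fun i => a (σ i)) = (Equiv.Perm.sign σ : ℤ) • arrayCoeff P a := by
  constructor
  · intro h σ a
    let m : Fin k →₀ ℕ := Finsupp.equivFunOnFinite.symm fun b => (a b).2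
    calc arrayCoeff P (fun i => a (σ i))
        = coeff m (rename σ (P fun b => (a (σ b)).1)) :=
          (coeff_rename_perm σ P (fun b => (a b).1) m).symm
      _ = _ := by rw [h σ fun b => (a b).1, coeff_smul, arrayCoeff_apply]
  · intro h σ i
    ext m
    rw [coeff_rename_perm, coeff_smul, coeff_eq_arrayCoeff]
    exact h σ fun b => (i b, m b)

theorem exists_arrayCoeff_eq {c : (Fin k → Fin l × ℕ) → V} {n : ℕ}
    (hc : ∀ a, (∃ i, n ≤ (a i).2) → c a = 0) : ∃ P : PolyArray V l k, arrayCoeff P = c := by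
  classical
  let exponents : Finset (Fin k →₀ ℕ) :=
    (Fintype.piFinset fun _ => Finset.range n).map Finsupp.equivFunOnFinite.symm.toEmbedding
  refine ⟨fun i => ∑ m ∈ exponents, monomial m (c fun b => (i b, m b)), funext fun a => ?_⟩
  simp only [arrayCoeff_apply, coeff_sum, coeff_monomial, Finset.sum_ite_eq']
  split_ifs with ha
  · rfl
  · refine (hc a ?_).symm
    by_contra! hlt
    exact ha (Finset.mem_map_of_mem _ (Fintype.mem_piFinset.2 fun i => Finset.mem_range.2 (hlt i)))

theorem exists_arrayCoeff_eq_zero (P : PolyArray V l k) :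
    ∃ n, ∀ a, (∃ i, n ≤ (a i).2) → arrayCoeff P a = 0 := by
  obtain ⟨n, hn⟩ := Finite.exists_le fun i => (P i).totalDegree
  refine ⟨n + 1, fun a ⟨i, hi⟩ => by_contra fun hne => ?_⟩
  have hle : (a i).2 ≤ (P fun b => (a b).1).totalDegree :=
    (le_degreeOf_of_mem_support i (mem_support_iff.2 hne)).trans (degreeOf_le_totalDegree _ i)
  exact absurd (hi.trans (hle.trans (hn _))) (Nat.not_succ_le_self n)

theorem coeff_coeffMap {f : V → V} (hf : f 0 = 0) (Q : MvPolynomial (Fin k) V) (m : Fin k →₀ ℕ) :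
    coeff m (coeffMap f Q) = f (coeff m Q) := by
  classical
  simp only [coeffMap, coeff_sum, coeff_monomial, Finset.sum_ite_eq', mem_support_iff]
  split_ifs with h
  · rfl
  · rw [not_not.1 h, hf]

theorem coeff_coeffMap_rename_mul_monomial {f : V → V} (hf : f 0 = 0) (Q : MvPolynomial (Fin k) V)
    (α : Fin (k + 1)) (m : Fin (k + 1) → ℕ) (r : ℕ) (x : V) :
    coeff (Finsupp.equivFunOnFinite.symm m)
      (coeffMap f (rename α.succAbove Q) * monomial (Finsupp.single α r) x) =
    if r = m α then
      f (coeff (Finsupp.equivFunOnFinite.symm fun b => m (α.succAbove b)) Q) * x else 0 := by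
  have hnot {u : Fin k →₀ ℕ} : Finsupp.mapDomain α.succAbove u α = 0 :=
    Finsupp.mapDomain_of_notMem_range _ _ (by simp)
  rw [coeff_mul_monomial', coeff_coeffMap hf]
  simp only [Finsupp.single_le_iff, Finsupp.equivFunOnFinite_symm_apply_apply]
  split_ifs with hle heq hr
  · have hm : Finsupp.equivFunOnFinite.symm m - Finsupp.single α r = Finsupp.mapDomain α.succAbove
        (Finsupp.equivFunOnFinite.symm fun b => m (α.succAbove b)) := by
      ext i
      cases i using α.succAboveCases with
      | x => simp [hnot, heq]
      | p b => simp [Finsupp.mapDomain_apply α.succAbove_right_injective]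
    rw [hm, coeff_rename_mapDomain _ α.succAbove_right_injective]
  · rw [coeff_rename_eq_zero _ _ _ fun u hu => ?_, hf, zero_mul]
    have hα := DFunLike.congr_fun hu α
    simp only [hnot, Finsupp.coe_tsub, Pi.sub_apply, Finsupp.single_eq_same,
      Finsupp.equivFunOnFinite_symm_apply_apply] at hα
    omega
  · omega
  · rfl

end PolyArray

section JetBases

theorem mul_add_fin_lt_mul_add_fin_iff {l m n : ℕ} {i j : Fin l} :
    m * l + i < n * l + j ↔ m < n ∨ m = n ∧ i < j := by
  have hstep {a b : ℕ} (hab : a < b) (x y : Fin l) : a * l + x < b * l + y :=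
    calc a * l + x < a * l + l := Nat.add_lt_add_left x.2 _
      _ = (a + 1) * l := (Nat.succ_mul a l).symm
      _ ≤ b * l + y := (Nat.mul_le_mul_right l hab).trans (Nat.le_add_right _ _)
  obtain hmn | rfl | hmn := lt_trichotomy m n
  · simp [hmn, hstep hmn]
  · simp
  · simp [hmn.not_gt, hmn.ne', (hstep hmn j i).le]

theorem mul_le_mul_add_fin_iff {l m n : ℕ} {j : Fin l} : m * l ≤ n * l + j ↔ m ≤ n := by
  have hl : 0 < l := j.pos
  rw [← Nat.le_div_iff_mul_le hl, Nat.add_comm, Nat.add_mul_div_right _ _ hl,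
    Nat.div_eq_of_lt j.2, Nat.zero_add]

theorem exists_eq_mul_add_fin (l : ℕ) [NeZero l] (p : ℕ) : ∃ n, ∃ j : Fin l, p = n * l + j :=
  ⟨p / l, Fin.ofNat l p, (Nat.div_add_mod' p l).symm⟩

variable {F : Type*} [CommRing F] {l : ℕ}

/-- The basis of the polynomials in `λ` with coefficients in `F^l` (encoded as `ℕ →₀ (Fin l → F)`)
obtained by multiplying a basis of `F^l` by the powers of `λ`. -/
noncomputable def jetBasis (b : Module.Basis (Fin l) F (Fin l → F)) :
    Module.Basis (Fin l × ℕ) F (ℕ →₀ (Fin l → F)) :=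
  (Finsupp.basis fun _ => b).reindex ((Equiv.sigmaEquivProd ℕ (Fin l)).trans (Equiv.prodComm _ _))

theorem jetBasis_apply (b : Module.Basis (Fin l) F (Fin l → F)) (i : Fin l) (r : ℕ) :
    jetBasis b (i, r) = Finsupp.single r (b i) := by
  simp [jetBasis]

theorem span_jetBasis_image (b : Module.Basis (Fin l) F (Fin l → F)) (n : ℕ) :
    Submodule.span F (jetBasis b '' {x | n ≤ x.2}) =
      ⨆ r ∈ Set.Ici n, LinearMap.range (Finsupp.lsingle (R := F) (M := Fin l → F) r) := by
  have himage : jetBasis b '' {x | n ≤ x.2} =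
      ⋃ r ∈ Set.Ici n, Finsupp.lsingle (R := F) r '' Set.range b := by
    ext m
    simp [jetBasis_apply]
    grind
  simp_rw [himage, Submodule.span_iUnion₂, Submodule.span_image, b.span_eq, Submodule.map_top]

variable (F l) [NeZero l]

/-- The standard basis `λ^n e_j` of `F^l[λ]`, enumerated lexicographically in `(n, j)`. -/
noncomputable def lexBasis : Module.Basis ℕ F (ℕ →₀ (Fin l → F)) :=
  (jetBasis (Pi.basisFun F (Fin l))).reindex
    ((Equiv.prodComm _ _).trans (Nat.divModEquiv l).symm)

variable {F l}

theorem lexBasis_apply (n : ℕ) (j : Fin l) :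
    lexBasis F l (n * l + j) = Finsupp.single n (Pi.single j 1) := by
  change lexBasis F l ((Nat.divModEquiv l).symm (n, j)) = _
  simp [lexBasis, jetBasis_apply, -Nat.divModEquiv_symm_apply]

theorem tailSpan_lexBasis (b : Module.Basis (Fin l) F (Fin l → F)) (n : ℕ) :
    tailSpan (lexBasis F l) (n * l) = Submodule.span F (jetBasis b '' {x | n ≤ x.2}) := by
  rw [span_jetBasis_image, ← span_jetBasis_image (Pi.basisFun F (Fin l)), tailSpan]
  congr 1
  ext m
  constructor
  · rintro ⟨p, hp, rfl⟩
    obtain ⟨r, j, rfl⟩ := exists_eq_mul_add_fin l p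
    exact ⟨(j, r), mul_le_mul_add_fin_iff.1 hp, by simp [lexBasis_apply, jetBasis_apply]⟩
  · rintro ⟨⟨j, r⟩, hr, rfl⟩
    exact ⟨r * l + j, mul_le_mul_add_fin_iff.2 hr, by simp [lexBasis_apply, jetBasis_apply]⟩

end JetBases

namespace IsAlgDiffFun

variable {V : Type*} [CommRing V] {l : ℕ} {pd : V → V} {D : Fin l → ℕ → V → V}

theorem d_zero (hV : IsAlgDiffFun pd D) (j : Fin l) (n : ℕ) : D j n 0 = 0 :=
  map_zero (AddMonoidHom.mk' (D j n) (hV.d_add j n))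

theorem d_one (hV : IsAlgDiffFun pd D) (j : Fin l) (n : ℕ) : D j n 1 = 0 := by
  simpa using hV.d_leibniz j n 1 1

theorem exists_forall_d_eq_zero (hV : IsAlgDiffFun pd D) (f : V) :
    ∃ b, ∀ j, ∀ n ≥ b, D j n f = 0 := by
  obtain ⟨b, hb⟩ := ((hV.d_fin f).image Prod.snd).bddAbove
  refine ⟨b + 1, fun j n hn => by_contra fun hne => ?_⟩
  exact absurd (hn.trans (hb ⟨(j, n), hne, rfl⟩)) (Nat.not_succ_le_self b)

/-- The ring of quasiconstants. -/
def quasiconstants (hV : IsAlgDiffFun pd D) : Subring V where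
  carrier := {f | ∀ j n, D j n f = 0}
  zero_mem' := hV.d_zero
  one_mem' := hV.d_one
  add_mem' hf hg j n := by rw [hV.d_add, hf, hg, add_zero]
  mul_mem' hf hg j n := by rw [hV.d_leibniz, hf, hg, zero_mul, mul_zero, add_zero]
  neg_mem' {f} hf j n :=
    (map_neg (AddMonoidHom.mk' (D j n) (hV.d_add j n)) f).trans (neg_eq_zero.2 (hf j n))

theorem mem_quasiconstants (hV : IsAlgDiffFun pd D) {f : V} :
    f ∈ hV.quasiconstants ↔ ∀ j n, D j n f = 0 :=
  Iff.rfl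

theorem pd_mem_quasiconstants (hV : IsAlgDiffFun pd D) {f : V} (hf : f ∈ hV.quasiconstants) :
    pd f ∈ hV.quasiconstants := by
  have hpd_zero : pd 0 = 0 := map_zero (AddMonoidHom.mk' pd hV.pd_add)
  rintro j (_ | n)
  · rw [hV.comm_zero, hf, hpd_zero]
  · rw [hV.comm_succ, hf, hf, hpd_zero, add_zero]

theorem mem_quasiconstants_of_mul_eq_one (hV : IsAlgDiffFun pd D) {f g : V}
    (hf : f ∈ hV.quasiconstants) (hfg : f * g = 1) : g ∈ hV.quasiconstants := by
  intro j n
  have hd : f * D j n g = 0 := by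
    simpa [hfg, hV.d_one, hf j n] using (hV.d_leibniz j n f g).symm
  calc D j n g = f * g * D j n g := by rw [hfg, one_mul]
    _ = g * (f * D j n g) := by ring
    _ = 0 := by rw [hd, mul_zero]

theorem isUnit_quasiconstants (hV : IsAlgDiffFun pd D) {f : hV.quasiconstants}
    (hf : IsUnit (f : V)) : IsUnit f := by
  obtain ⟨g, hfg⟩ := hf.exists_right_inv
  exact IsUnit.of_mul_eq_one ⟨g, hV.mem_quasiconstants_of_mul_eq_one f.2 hfg⟩ (Subtype.ext hfg)

/-- The derivation `∂/∂u_j^{(n)}` as an endomorphism linear over the quasiconstants. -/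
def partialD (hV : IsAlgDiffFun pd D) (j : Fin l) (n : ℕ) : Module.End hV.quasiconstants V where
  toFun := D j n
  map_add' := hV.d_add j n
  map_smul' r f := by
    rw [Subring.smul_def, smul_eq_mul, hV.d_leibniz, r.2 j n, zero_mul, zero_add]
    rfl

theorem d_smul (hV : IsAlgDiffFun pd D) (j : Fin l) (n : ℕ) (r : hV.quasiconstants) (f : V) :
    D j n (r • f) = r • D j n f :=
  (hV.partialD j n).map_smul r f

theorem commute_partialD (hV : IsAlgDiffFun pd D) (i j : Fin l) (m n : ℕ) :
    Commute (hV.partialD i m) (hV.partialD j n) :=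
  LinearMap.ext (hV.d_comm i m j n)

end IsAlgDiffFun

section SymbolCoeff

variable {V : Type*} [CommRing V] {l : ℕ}

/-- The coefficient of `λ^r` in `(λ + ∂)^n K_{j,i}(λ)`, where `x = (i, r)`. -/
def symbolCoeff (pd : V → V) (N : ℕ) (Kc : Fin l → Fin l → ℕ → V) (n : ℕ) (j : Fin l)
    (x : Fin l × ℕ) : V :=
  ∑ m ∈ Finset.range (N + 1), ∑ p ∈ Finset.range (n + 1),
    if n - p + m = x.2 then (n.choose p : V) * pd^[p] (Kc j x.1 m) else 0

variable {pd : V → V} {N : ℕ} {Kc : Fin l → Fin l → ℕ → V} {n : ℕ} {j : Fin l}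

theorem symbolCoeff_eq_zero {x : Fin l × ℕ} (hx : n + N < x.2) :
    symbolCoeff pd N Kc n j x = 0 :=
  Finset.sum_eq_zero fun m hm => Finset.sum_eq_zero fun p _ => if_neg <| by
    have := Finset.mem_range.1 hm
    omega

theorem symbolCoeff_leading (i : Fin l) : symbolCoeff pd N Kc n j (i, n + N) = Kc j i N := by
  rw [symbolCoeff, Finset.sum_eq_single N, Finset.sum_eq_single 0]
  · simp
  · exact fun p hp hp0 => if_neg (by grind)
  · simp
  · exact fun m hm hmN => Finset.sum_eq_zero fun p hp => if_neg (by grind)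
  · simp

open MvPolynomial in
theorem coeff_coeffMap_rename_mul_kFactor {f : V → V} (hf : f 0 = 0) {k : ℕ}
    (Q : MvPolynomial (Fin k) V) (α : Fin (k + 1)) (m : Fin (k + 1) → ℕ) (i : Fin l) :
    coeff (Finsupp.equivFunOnFinite.symm m)
      (coeffMap f (rename α.succAbove Q) * kFactor pd N Kc n j i α) =
    symbolCoeff pd N Kc n j (i, m α) *
      f (coeff (Finsupp.equivFunOnFinite.symm fun b => m (α.succAbove b)) Q) := by
  simp only [kFactor, symbolCoeff, Finset.mul_sum, Finset.sum_mul, coeff_sum,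
    coeff_coeffMap_rename_mul_monomial hf, ite_mul, zero_mul]
  simp only [mul_comm]

theorem IsAlgDiffFun.symbolCoeff_mem_quasiconstants {D : Fin l → ℕ → V → V}
    (hV : IsAlgDiffFun pd D) (hK : ∀ i j m, Kc i j m ∈ hV.quasiconstants) (x : Fin l × ℕ) :
    symbolCoeff pd N Kc n j x ∈ hV.quasiconstants := by
  have hiterate (p : ℕ) {f : V} (hf : f ∈ hV.quasiconstants) : pd^[p] f ∈ hV.quasiconstants :=
    Set.MapsTo.iterate (fun _ => hV.pd_mem_quasiconstants) p hf
  refine sum_mem fun m _ => sum_mem fun p _ => ?_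
  split_ifs
  · exact mul_mem (natCast_mem _ _) (hiterate p (hK _ _ _))
  · exact zero_mem _

end SymbolCoeff

namespace IsAlgDiffFun

section SymbolOperators

variable {V : Type*} [CommRing V] {l : ℕ} {pd : V → V} {D : Fin l → ℕ → V → V}
  (hV : IsAlgDiffFun pd D) (N : ℕ) (Kc : Fin l → Fin l → ℕ → V)

include hV in
theorem finite_support_mul_d (c : ℕ → V) (j : Fin l) (f : V) :
    (Function.support fun n => c n * D j n f).Finite :=
  ((hV.d_fin f).preimage (Prod.mk_right_injective j).injOn).subset fun _ hn =>
    right_ne_zero_of_mul hn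

/-- The operator by which the coefficient of `λ^r e_i` acts on `V`, where `x = (i, r)`:
`f ↦ Σ_j Σ_n θ ∂f/∂u_j^{(n)}` with `θ` the coefficient of `λ^r` in `(λ + ∂)^n K_{j,i}(λ)`. -/
noncomputable def symbolOp (x : Fin l × ℕ) : Module.End hV.quasiconstants V where
  toFun f := ∑ j, ∑ᶠ n, symbolCoeff pd N Kc n j x * D j n f
  map_add' f g := by
    simp only [hV.d_add, mul_add, ← Finset.sum_add_distrib]
    exact Finset.sum_congr rfl fun j _ =>
      finsum_add_distrib (hV.finite_support_mul_d _ j f) (hV.finite_support_mul_d _ j g)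
  map_smul' r f := by
    simp only [hV.d_smul, RingHom.id_apply, Finset.smul_sum, mul_smul_comm]
    exact Finset.sum_congr rfl fun j _ => (smul_finsum' r (hV.finite_support_mul_d _ j f)).symm

theorem symbolOp_apply (x : Fin l × ℕ) (f : V) :
    hV.symbolOp N Kc x f = ∑ j, ∑ᶠ n, symbolCoeff pd N Kc n j x * D j n f :=
  rfl

theorem symbolOp_eq_sum_leading {n : ℕ} {f : V} (hf : ∀ j, ∀ n' > n, D j n' f = 0) (i : Fin l) :
    hV.symbolOp N Kc (i, n + N) f = ∑ j, Kc j i N * D j n f := by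
  refine (hV.symbolOp_apply N Kc _ f).trans (Finset.sum_congr rfl fun j _ => ?_)
  rw [finsum_eq_single _ n, symbolCoeff_leading]
  intro n' hn'
  obtain hlt | hgt := hn'.lt_or_gt
  · rw [symbolCoeff_eq_zero (Nat.add_lt_add_right hlt N), zero_mul]
  · rw [hf j n' hgt, mul_zero]

open MvPolynomial in
include hV in
theorem finite_support_coeffMap {k : ℕ} (j : Fin l) (Q : MvPolynomial (Fin k) V) :
    (Function.support fun n => coeffMap (D j n) Q).Finite := by
  have hfin (m : Fin k →₀ ℕ) : {n | D j n (coeff m Q) ≠ 0}.Finite :=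
    (hV.d_fin (coeff m Q)).preimage (Prod.mk_right_injective j).injOn
  refine (Q.support.finite_toSet.biUnion fun m _ => hfin m).subset fun n hn => ?_
  obtain ⟨m, hm, hne⟩ := Finset.exists_ne_zero_of_sum_ne_zero hn
  exact Set.mem_biUnion hm fun h => hne (by rw [h, monomial_zero])

open MvPolynomial in
theorem arrayCoeff_deltaK {k : ℕ} (P : PolyArray V l k) (a : Fin (k + 1) → Fin l × ℕ) :
    arrayCoeff (deltaK pd D N Kc P) a = ∑ α : Fin (k + 1), (-1 : ℤ) ^ (α : ℕ) •
      hV.symbolOp N Kc (a α) (arrayCoeff P fun b => a (α.succAbove b)) := by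
  let ev := (lcoeff V (Finsupp.equivFunOnFinite.symm fun i => (a i).2)).toAddMonoidHom
  have hterm (α : Fin (k + 1)) (j : Fin l) : ev (∑ᶠ n,
      coeffMap (D j n) (rename α.succAbove (P fun b => (a (α.succAbove b)).1)) *
        kFactor pd N Kc n j (a α).1 α) =
      ∑ᶠ n, symbolCoeff pd N Kc n j (a α) * D j n (arrayCoeff P fun b => a (α.succAbove b)) := by
    rw [AddMonoidHom.map_finsum]
    · exact finsum_congr fun n =>
        coeff_coeffMap_rename_mul_kFactor (hV.d_zero j n) _ α (fun i => (a i).2) (a α).1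
    · exact (hV.finite_support_coeffMap j _).subset fun n hn => left_ne_zero_of_mul hn
  change ev (∑ α, _) = _
  simp only [map_sum, map_zsmul, hterm, symbolOp_apply]

variable {N Kc} (hK : ∀ i j m, Kc i j m ∈ hV.quasiconstants)
include hK

theorem commute_symbolOp {φ : Module.End hV.quasiconstants V}
    (hφ : ∀ j n, Commute φ (hV.partialD j n)) (x : Fin l × ℕ) :
    Commute φ (hV.symbolOp N Kc x) := by
  refine LinearMap.ext fun f => ?_
  have hterm (j : Fin l) (n : ℕ) :
      φ (symbolCoeff pd N Kc n j x * D j n f) = symbolCoeff pd N Kc n j x * D j n (φ f) :=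
    (φ.map_smul ⟨_, hV.symbolCoeff_mem_quasiconstants hK x⟩ _).trans
      (congrArg _ (LinearMap.congr_fun (hφ j n) f))
  simp only [Module.End.mul_apply, symbolOp_apply, map_sum, ← hterm]
  exact Finset.sum_congr rfl fun j _ => map_finsum _ (hV.finite_support_mul_d _ j f)

theorem commute_symbolOp_symbolOp (x y : Fin l × ℕ) :
    Commute (hV.symbolOp N Kc x) (hV.symbolOp N Kc y) :=
  hV.commute_symbolOp hK
    (fun j n => (hV.commute_symbolOp hK (hV.commute_partialD j · n ·) x).symm) y

end SymbolOperators

end IsAlgDiffFun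

namespace IsAlgDiffFun

section SymbolAction

variable {V : Type*} [CommRing V] {l : ℕ} {pd : V → V} {D : Fin l → ℕ → V → V}
  (hV : IsAlgDiffFun pd D) (N : ℕ) (Kc : Fin l → Fin l → ℕ → V)
  (b : Module.Basis (Fin l) hV.quasiconstants (Fin l → hV.quasiconstants))

/-- The action of `F^l[λ]` on `V` extending `symbolOp` when `b i` stands for the `i`-th column of
the leading coefficient `K_N`. With this normalization the leading term of the action of `λ^{n+N} x`
is `Σ_j x_j ∂/∂u_j^{(n)}`. -/
noncomputable def symbolAction :
    (ℕ →₀ (Fin l → hV.quasiconstants)) →ₗ[hV.quasiconstants] Module.End hV.quasiconstants V :=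
  (jetBasis b).constr hV.quasiconstants (hV.symbolOp N Kc)

theorem symbolAction_jetBasis (x : Fin l × ℕ) :
    hV.symbolAction N Kc b (jetBasis b x) = hV.symbolOp N Kc x :=
  Module.Basis.constr_basis _ _ _ _

variable {N Kc b}

theorem commute_symbolAction (hK : ∀ i j m, Kc i j m ∈ hV.quasiconstants)
    (x y : ℕ →₀ (Fin l → hV.quasiconstants)) :
    Commute (hV.symbolAction N Kc b x) (hV.symbolAction N Kc b y) := by
  let mul := (LinearMap.mul hV.quasiconstants (Module.End hV.quasiconstants V)).compl₁₂
    (hV.symbolAction N Kc b) (hV.symbolAction N Kc b)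
  have hmul : mul = mul.flip := LinearMap.ext_basis (jetBasis b) (jetBasis b) fun p q => by
    simp only [mul, LinearMap.flip_apply, LinearMap.compl₁₂_apply, symbolAction_jetBasis]
    exact hV.commute_symbolOp_symbolOp hK p q
  exact LinearMap.congr_fun₂ hmul x y

theorem exists_basis_coe_eq_leading (hK : ∀ i j m, Kc i j m ∈ hV.quasiconstants)
    (hKinv : IsUnit (Matrix.of fun i j => Kc i j N)) :
    ∃ b : Module.Basis (Fin l) hV.quasiconstants (Fin l → hV.quasiconstants),
      ∀ i j, (b i j : V) = Kc j i N := by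
  let A : Matrix (Fin l) (Fin l) hV.quasiconstants := Matrix.of fun i j => ⟨Kc i j N, hK i j N⟩
  have hA : IsUnit A.det := hV.isUnit_quasiconstants <| by
    rw [← Subring.coe_subtype, RingHom.map_det]
    exact (Matrix.isUnit_iff_isUnit_det _).1 hKinv
  refine ⟨(Pi.basisFun _ _).map (Matrix.toLinearEquiv (Pi.basisFun _ _) A hA), fun i j => ?_⟩
  simp [Matrix.toLin_eq_toLin', A]

section Leading

variable (hb : ∀ i j, (b i j : V) = Kc j i N)
include hb

theorem symbolAction_single {n : ℕ} {f : V} (hf : ∀ j, ∀ n' > n, D j n' f = 0)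
    (x : Fin l → hV.quasiconstants) :
    hV.symbolAction N Kc b (Finsupp.single (n + N) x) f = ∑ j, x j • D j n f := by
  let leading : (Fin l → hV.quasiconstants) →ₗ[hV.quasiconstants] V :=
    ∑ j, (LinearMap.proj j).smulRight (D j n f)
  have hbasis : (LinearMap.applyₗ f ∘ₗ hV.symbolAction N Kc b) ∘ₗ Finsupp.lsingle (n + N) =
      leading := by
    refine b.ext fun i => ?_
    have hsingle : Finsupp.lsingle (R := hV.quasiconstants) (n + N) (b i) = jetBasis b (i, n + N) :=
      (jetBasis_apply b i (n + N)).symm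
    rw [LinearMap.comp_apply, hsingle, LinearMap.comp_apply, symbolAction_jetBasis]
    simp [leading, hV.symbolOp_eq_sum_leading N Kc hf i, Subring.smul_def, hb]
  simpa [leading] using LinearMap.congr_fun hbasis x

variable [NeZero l]

theorem symbolAction_lexBasis {n : ℕ} {f : V} (hf : ∀ j, ∀ n' > n, D j n' f = 0) (j : Fin l) :
    hV.symbolAction N Kc b (lexBasis hV.quasiconstants l (N * l + (n * l + j))) f = D j n f := by
  have hindex : N * l + (n * l + j) = (n + N) * l + j := by ring
  rw [hindex, lexBasis_apply, hV.symbolAction_single hb hf]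
  simp [Pi.single_apply, ite_smul]

theorem mem_tailKer_symbolAction {t : ℕ} {f : V} :
    f ∈ tailKer (hV.symbolAction N Kc b) (lexBasis hV.quasiconstants l) (N * l + t) ↔
      ∀ n (j : Fin l), t ≤ n * l + j → D j n f = 0 := by
  have hlater {n : ℕ} {j : Fin l} (h : ∀ n' (j' : Fin l), n * l + j < n' * l + j' → D j' n' f = 0)
      (j' : Fin l) : ∀ n' > n, D j' n' f = 0 :=
    fun n' hn' => h n' j' (mul_add_fin_lt_mul_add_fin_iff.2 (Or.inl hn'))
  rw [mem_tailKer]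
  constructor
  · intro h
    suffices hall : ∀ p ≥ t, ∀ n (j : Fin l), p = n * l + j → D j n f = 0 from
      fun n j ht => hall _ ht n j rfl
    intro p
    induction p using Nat.strong_decreasing_induction with
    | base =>
      obtain ⟨s, hs⟩ := hV.exists_forall_d_eq_zero f
      refine ⟨s * l, fun p hp _ n j hpn => hs j n ?_⟩
      exact mul_le_mul_add_fin_iff.1 (hpn ▸ hp.le)
    | step p ih =>
      rintro ht n j rfl
      rw [← hV.symbolAction_lexBasis hb
        (hlater fun n' j' hlt => ih _ hlt (ht.trans hlt.le) _ _ rfl)]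
      exact h _ (Nat.add_le_add_left ht _)
  · intro h r hr
    obtain ⟨p, rfl⟩ := Nat.exists_eq_add_of_le (le_of_add_le_left hr)
    obtain ⟨n, j, rfl⟩ := exists_eq_mul_add_fin l p
    have ht := Nat.le_of_add_le_add_left hr
    rw [hV.symbolAction_lexBasis hb (hlater fun n' j' hlt => h n' j' (ht.trans hlt.le))]
    exact h n j ht

theorem mem_tailKer_symbolAction_iff_quasiconstant {f : V} :
    f ∈ tailKer (hV.symbolAction N Kc b) (lexBasis hV.quasiconstants l) (N * l) ↔
      f ∈ hV.quasiconstants := by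
  rw [← Nat.add_zero (N * l), hV.mem_tailKer_symbolAction hb]
  exact ⟨fun h j n => h n j (Nat.zero_le _), fun h n j _ => h j n⟩

theorem exists_mem_tailKer_symbolAction (f : V) :
    ∃ p, f ∈ tailKer (hV.symbolAction N Kc b) (lexBasis hV.quasiconstants l) p := by
  obtain ⟨s, hs⟩ := hV.exists_forall_d_eq_zero f
  exact ⟨N * l + s * l, (hV.mem_tailKer_symbolAction hb).2 fun n j h =>
    hs j n (mul_le_mul_add_fin_iff.1 h)⟩

theorem mem_tailKer_symbolAction_iff_memVmi {m : ℕ} {i : Fin l} {f : V} :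
    f ∈ tailKer (hV.symbolAction N Kc b) (lexBasis hV.quasiconstants l)
      (N * l + (m * l + i) + 1) ↔ memVmi D m i f := by
  simp only [Nat.add_assoc (N * l), hV.mem_tailKer_symbolAction hb, Nat.succ_le_iff,
    mul_add_fin_lt_mul_add_fin_iff, memVmi]

theorem surjOn_tailKer_symbolAction (hnorm : IsNormalADF D) (p : ℕ) (hp : N * l ≤ p) :
    Set.SurjOn (hV.symbolAction N Kc b (lexBasis hV.quasiconstants l p))
      (tailKer (hV.symbolAction N Kc b) (lexBasis hV.quasiconstants l) (p + 1))
      (tailKer (hV.symbolAction N Kc b) (lexBasis hV.quasiconstants l) (p + 1)) := by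
  intro f hf
  obtain ⟨p, rfl⟩ := Nat.exists_eq_add_of_le hp
  obtain ⟨m, i, rfl⟩ := exists_eq_mul_add_fin l p
  obtain ⟨g, hg, hgf⟩ := hnorm m i f ((hV.mem_tailKer_symbolAction_iff_memVmi hb).1 hf)
  refine ⟨g, (hV.mem_tailKer_symbolAction_iff_memVmi hb).2 hg, ?_⟩
  rw [hV.symbolAction_lexBasis hb fun j n hn => hg n j (Or.inl hn), hgf]

end Leading

end SymbolAction

end IsAlgDiffFun

section SkewArrays

variable {V : Type*} [CommRing V] {F : Subring V} {l k : ℕ}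
  {b : Module.Basis (Fin l) F (Fin l → F)}

/-- The alternating map `w` on `F^l[λ]` encodes the array `P`: its values on the basis `λ^r b_i` are
the coefficients of `P`. -/
def Encodes (b : Module.Basis (Fin l) F (Fin l → F))
    (w : (ℕ →₀ (Fin l → F)) [⋀^Fin k]→ₗ[F] V) (P : PolyArray V l k) : Prop :=
  ∀ a, w (fun i => jetBasis b (a i)) = arrayCoeff P a

theorem Encodes.omegaSkew {w : (ℕ →₀ (Fin l → F)) [⋀^Fin k]→ₗ[F] V} {P : PolyArray V l k}
    (hw : Encodes b w P) : OmegaSkew P :=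
  (omegaSkew_iff_arrayCoeff P).2 fun σ a => by
    rw [← hw, ← hw]
    exact w.map_perm (fun i => jetBasis b (a i)) σ

theorem exists_encodes_of_omegaSkew (htwo : ∀ x : V, x + x = 0 → x = 0)
    (b : Module.Basis (Fin l) F (Fin l → F)) {P : PolyArray V l k} (hP : OmegaSkew P) :
    ∃ w, Encodes b w P :=
  exists_alternatingMap_basis_eq htwo (jetBasis b) ((omegaSkew_iff_arrayCoeff P).1 hP)

theorem Encodes.mem_horizontal_iff [NeZero l] {w : (ℕ →₀ (Fin l → F)) [⋀^Fin k]→ₗ[F] V}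
    {P : PolyArray V l k} (hw : Encodes b w P) {n : ℕ} :
    w ∈ horizontal k V (tailSpan (lexBasis F l) (n * l)) ↔
      ∀ a, (∃ i, n ≤ (a i).2) → arrayCoeff P a = 0 := by
  simp only [tailSpan_lexBasis b, mem_horizontal_basis_iff, ← hw _, Set.mem_ofPred_eq]

theorem Encodes.exists_mem_horizontal [NeZero l] {w : (ℕ →₀ (Fin l → F)) [⋀^Fin k]→ₗ[F] V}
    {P : PolyArray V l k} (hw : Encodes b w P) :
    ∃ q, w ∈ horizontal k V (tailSpan (lexBasis F l) q) :=
  (exists_arrayCoeff_eq_zero P).imp' (· * l) fun _ => hw.mem_horizontal_iff.2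

theorem exists_encodes_of_mem_horizontal [NeZero l] (b : Module.Basis (Fin l) F (Fin l → F))
    {w : (ℕ →₀ (Fin l → F)) [⋀^Fin k]→ₗ[F] V} {q : ℕ}
    (hw : w ∈ horizontal k V (tailSpan (lexBasis F l) q)) : ∃ P, Encodes b w P := by
  have hq : q ≤ q * l := Nat.le_mul_of_pos_right q (NeZero.pos l)
  replace hw := horizontal_anti (tailSpan_anti hq) hw
  rw [tailSpan_lexBasis b, mem_horizontal_basis_iff] at hw
  exact (exists_arrayCoeff_eq hw).imp fun P hP a => (congrFun hP a).symm

theorem arrayCoeff_smul (r : F) (P : PolyArray V l k) : arrayCoeff (r • P) = r • arrayCoeff P :=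
  (arrayCoeff.restrictScalars F).map_smul r P

/-- The space `Ω̃^k(V)` of skewsymmetric arrays. -/
def skewArrays (F : Subring V) (l k : ℕ) : Submodule F (PolyArray V l k) where
  carrier := {P | OmegaSkew P}
  zero_mem' σ i := by simp
  add_mem' hP hQ σ i := by simp [hP σ i, hQ σ i]
  smul_mem' r P hP := (omegaSkew_iff_arrayCoeff _).2 fun σ a => by
    simp only [arrayCoeff_smul, Pi.smul_apply, (omegaSkew_iff_arrayCoeff P).1 hP σ a, smul_comm r]

/-- For `F` the ring of quasiconstants, the space `Ω̃^k_{0,0}` of skewsymmetric arrays with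
coefficients in `F` and of degree less than `N` in each variable. -/
def constArrays (F : Subring V) (l N k : ℕ) : Submodule F (PolyArray V l k) where
  carrier := {P | OmegaSkew P ∧ (∀ a, arrayCoeff P a ∈ F) ∧
    ∀ a, (∃ i, N ≤ (a i).2) → arrayCoeff P a = 0}
  zero_mem' := ⟨(skewArrays F l k).zero_mem, fun _ => F.zero_mem, fun _ _ => rfl⟩
  add_mem' hP hQ := ⟨(skewArrays F l k).add_mem hP.1 hQ.1, fun a => F.add_mem (hP.2.1 a) (hQ.2.1 a),
    fun a ha => by rw [map_add, Pi.add_apply, hP.2.2 a ha, hQ.2.2 a ha, add_zero]⟩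
  smul_mem' r P hP := by
    refine ⟨(skewArrays F l k).smul_mem r hP.1, fun a => ?_, fun a ha => ?_⟩
    · rw [arrayCoeff_smul]
      exact F.mul_mem r.2 (hP.2.1 a)
    · rw [arrayCoeff_smul, Pi.smul_apply, hP.2.2 a ha, smul_zero]

theorem mem_constArrays {N : ℕ} {P : PolyArray V l k} : P ∈ constArrays F l N k ↔ OmegaSkew P ∧
    (∀ a, arrayCoeff P a ∈ F) ∧ ∀ a, (∃ i, N ≤ (a i).2) → arrayCoeff P a = 0 :=
  Iff.rfl

open MvPolynomial in
theorem mem_constArrays_iff_coeff {N : ℕ} {P : PolyArray V l k} :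
    P ∈ constArrays F l N k ↔ OmegaSkew P ∧ (∀ i m, coeff m (P i) ∈ F) ∧
      ∀ i, ∀ m ∈ (P i).support, ∀ α, m α < N := by
  rw [mem_constArrays]
  refine and_congr_right fun _ => and_congr ⟨fun h i m => ?_, fun h a => h _ _⟩
    ⟨fun h i m hm α => ?_, fun h a ⟨α, hα⟩ => ?_⟩
  · rw [coeff_eq_arrayCoeff]
    exact h _
  · by_contra! hα
    exact mem_support_iff.1 hm (by rw [coeff_eq_arrayCoeff, h _ ⟨α, hα⟩])
  · exact by_contra fun hne => (h _ _ (mem_support_iff.2 hne) α).not_ge hα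

/-- The values of an `F`-valued alternating map on the basis `λ^r b_i`, viewed in `V`. -/
noncomputable def jetBasisValues (b : Module.Basis (Fin l) F (Fin l → F)) :
    (ℕ →₀ (Fin l → F)) [⋀^Fin k]→ₗ[F] F →ₗ[F] (Fin k → Fin l × ℕ) → V where
  toFun e a := e fun i => jetBasis b (a i)
  map_add' _ _ := rfl
  map_smul' _ _ := rfl

theorem jetBasisValues_injective (b : Module.Basis (Fin l) F (Fin l → F)) :
    Function.Injective (jetBasisValues b (k := k)) := fun _ _ h =>
  Module.Basis.ext_alternating (jetBasis b) fun a _ => Subtype.ext (congrFun h a)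

theorem map_arrayCoeff_constArrays [NeZero l] (htwo : ∀ x : V, x + x = 0 → x = 0)
    (b : Module.Basis (Fin l) F (Fin l → F)) (N : ℕ) :
    (constArrays F l N k).map (arrayCoeff.restrictScalars F) =
      (horizontal k F (tailSpan (lexBasis F l) (N * l))).map (jetBasisValues b) := by
  ext c
  constructor
  · rintro ⟨P, hP, rfl⟩
    obtain ⟨w, hw⟩ := exists_encodes_of_omegaSkew htwo b hP.1
    obtain ⟨e, he, rfl⟩ := exists_horizontal_compAlternatingMap_eq (lexBasis F l)
      (Algebra.linearMap F V) (hw.mem_horizontal_iff.2 hP.2.2)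
      (forall_mem_of_forall_basis_mem (jetBasis b) fun a => by
        rw [hw a]
        exact ⟨⟨_, hP.2.1 a⟩, rfl⟩)
    exact ⟨e, he, funext hw⟩
  · rintro ⟨e, he, rfl⟩
    have hcomp := compAlternatingMap_mem_horizontal he (Algebra.linearMap F V)
    obtain ⟨P, hP⟩ := exists_encodes_of_mem_horizontal b hcomp
    refine ⟨P, ⟨hP.omegaSkew, fun a => ?_, hP.mem_horizontal_iff.1 hcomp⟩, (funext hP).symm⟩
    rw [← hP a]
    exact Subtype.property _

theorem rank_constArrays [Nontrivial V] [NeZero l] (htwo : ∀ x : V, x + x = 0 → x = 0) (N : ℕ) :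
    Module.rank F (constArrays F l N k) = ((N * l).choose k : Cardinal) := by
  let coeffs : PolyArray V l k →ₗ[F] (Fin k → Fin l × ℕ) → V := arrayCoeff.restrictScalars F
  calc Module.rank F (constArrays F l N k)
      = Module.rank F ((constArrays F l N k).map coeffs) :=
        (Submodule.equivMapOfInjective coeffs arrayCoeff_injective _).rank_eq
    _ = Module.rank F (horizontal k F (tailSpan (lexBasis F l) (N * l))) := by
        rw [map_arrayCoeff_constArrays htwo (Pi.basisFun F (Fin l))]
        exact (Submodule.equivMapOfInjective _ (jetBasisValues_injective _) _).rank_eq.symm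
    _ = ((N * l).choose k : Cardinal) := by
        have : Finite ↥(Set.Ici (N * l))ᶜ := by
          rw [Set.compl_Ici]
          infer_instance
        rw [tailSpan, rank_horizontal, Set.compl_Ici]
        simp

end SkewArrays

namespace IsAlgDiffFun

section Cohomology

variable {V : Type*} [CommRing V] {l k : ℕ} {pd : V → V} {D : Fin l → ℕ → V → V}
  (hV : IsAlgDiffFun pd D) (N : ℕ) (Kc : Fin l → Fin l → ℕ → V)

/-- The differential `δ_K` as an `F`-linear map, `F` being the ring of quasiconstants. -/
noncomputable def deltaLin (k : ℕ) :
    PolyArray V l k →ₗ[hV.quasiconstants] PolyArray V l (k + 1) where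
  toFun := deltaK pd D N Kc
  map_add' P Q := arrayCoeff_injective <| funext fun a => by
    simp only [map_add, Pi.add_apply, arrayCoeff_deltaK hV, smul_add, Finset.sum_add_distrib]
  map_smul' r P := arrayCoeff_injective <| funext fun a => by
    simp only [arrayCoeff_smul, Pi.smul_apply, arrayCoeff_deltaK hV, map_smul, Finset.smul_sum,
      smul_comm r, RingHom.id_apply]

theorem deltaLin_apply (P : PolyArray V l k) : hV.deltaLin N Kc k P = deltaK pd D N Kc P :=
  rfl

variable {N Kc}

theorem symbolOp_of_mem_quasiconstants (x : Fin l × ℕ) {f : V} (hf : f ∈ hV.quasiconstants) :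
    hV.symbolOp N Kc x f = 0 := by
  simp only [symbolOp_apply, hV.mem_quasiconstants.1 hf, mul_zero, finsum_zero,
    Finset.sum_const_zero]

theorem deltaLin_eq_zero_of_mem_constArrays {P : PolyArray V l k}
    (hP : P ∈ constArrays hV.quasiconstants l N k) : hV.deltaLin N Kc k P = 0 :=
  arrayCoeff_injective <| funext fun a => by
    simp only [deltaLin_apply, arrayCoeff_deltaK hV, map_zero, Pi.zero_apply,
      hV.symbolOp_of_mem_quasiconstants _ (hP.2.1 _), smul_zero, Finset.sum_const_zero]

theorem encodes_deltaLin {b : Module.Basis (Fin l) hV.quasiconstants (Fin l → hV.quasiconstants)}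
    {w : (ℕ →₀ (Fin l → hV.quasiconstants)) [⋀^Fin k]→ₗ[hV.quasiconstants] V}
    {P : PolyArray V l k} (hw : Encodes b w P) :
    Encodes b (koszulDiff (hV.symbolAction N Kc b) w) (hV.deltaLin N Kc k P) := fun a => by
  simp only [koszulDiff_apply, symbolAction_jetBasis, deltaLin_apply, arrayCoeff_deltaK hV]
  exact Finset.sum_congr rfl fun α _ => by rw [hw fun i => a (α.succAbove i)]

variable (htwo : ∀ x : V, x + x = 0 → x = 0)
include htwo

theorem deltaLin_mem_skewArrays {P : PolyArray V l k}
    (hP : P ∈ skewArrays hV.quasiconstants l k) :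
    hV.deltaLin N Kc k P ∈ skewArrays hV.quasiconstants l (k + 1) := by
  obtain ⟨w, hw⟩ := exists_encodes_of_omegaSkew htwo (Pi.basisFun hV.quasiconstants (Fin l)) hP
  exact (hV.encodes_deltaLin hw).omegaSkew

variable (hK : ∀ i j m, Kc i j m ∈ hV.quasiconstants)
include hK

theorem deltaLin_deltaLin {P : PolyArray V l k} (hP : P ∈ skewArrays hV.quasiconstants l k) :
    hV.deltaLin N Kc (k + 1) (hV.deltaLin N Kc k P) = 0 := by
  obtain ⟨w, hw⟩ := exists_encodes_of_omegaSkew htwo (Pi.basisFun hV.quasiconstants (Fin l)) hP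
  refine arrayCoeff_injective (funext fun a => ?_)
  rw [← hV.encodes_deltaLin (hV.encodes_deltaLin hw),
    koszulDiff_koszulDiff (hV.commute_symbolAction hK)]
  rfl

variable [NeZero l] (hKinv : IsUnit (Matrix.of fun i j => Kc i j N))
include hKinv

theorem mem_constArrays_zero_of_deltaLin {P : PolyArray V l 0}
    (hP : P ∈ skewArrays hV.quasiconstants l 0)
    (hδ : ∀ a, (∃ i, N ≤ (a i).2) → arrayCoeff (hV.deltaLin N Kc 0 P) a = 0) :
    P ∈ constArrays hV.quasiconstants l N 0 := by
  obtain ⟨b, hb⟩ := hV.exists_basis_coe_eq_leading hK hKinv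
  obtain ⟨w, hw⟩ := exists_encodes_of_omegaSkew htwo b hP
  refine ⟨hP, fun a => ?_, fun a ⟨i, _⟩ => i.elim0⟩
  rw [← hw a, ← hV.mem_tailKer_symbolAction_iff_quasiconstant hb]
  exact apply_mem_tailKer_of_koszulDiff_mem_horizontal
    ((hV.encodes_deltaLin hw).mem_horizontal_iff.2 hδ) _

theorem skewArrays_inf_ker_deltaLin_zero :
    skewArrays hV.quasiconstants l 0 ⊓ LinearMap.ker (hV.deltaLin N Kc 0) =
      constArrays hV.quasiconstants l N 0 := by
  ext P
  refine ⟨fun ⟨hP, hδ⟩ => ?_, fun hP => ⟨hP.1, hV.deltaLin_eq_zero_of_mem_constArrays hP⟩⟩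
  refine hV.mem_constArrays_zero_of_deltaLin htwo hK hKinv hP fun a _ => ?_
  rw [LinearMap.mem_ker.1 hδ]
  rfl

variable (hnorm : IsNormalADF D)
include hnorm

theorem exists_sub_deltaLin_mem_constArrays {P : PolyArray V l (k + 1)}
    (hP : P ∈ skewArrays hV.quasiconstants l (k + 1))
    (hδ : ∀ a, (∃ i, N ≤ (a i).2) → arrayCoeff (hV.deltaLin N Kc (k + 1) P) a = 0) :
    ∃ Q ∈ skewArrays hV.quasiconstants l k,
      P - hV.deltaLin N Kc k Q ∈ constArrays hV.quasiconstants l N (k + 1) := by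
  obtain ⟨b, hb⟩ := hV.exists_basis_coe_eq_leading hK hKinv
  obtain ⟨w, hw⟩ := exists_encodes_of_omegaSkew htwo b hP
  obtain ⟨r, hr⟩ := hw.exists_mem_horizontal
  obtain ⟨p, e, he, hvanish, hker⟩ := exists_sub_koszulDiff_mem_horizontal
    (hV.commute_symbolAction hK) (hV.surjOn_tailKer_symbolAction hb hnorm)
    (hV.exists_mem_tailKer_symbolAction hb) hr ((hV.encodes_deltaLin hw).mem_horizontal_iff.2 hδ)
  obtain ⟨Q, hQ⟩ := exists_encodes_of_mem_horizontal b he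
  have hsub : Encodes b (w - koszulDiff (hV.symbolAction N Kc b) e) (P - hV.deltaLin N Kc k Q) :=
    fun a => by
      rw [map_sub, Pi.sub_apply, ← hw a, ← hV.encodes_deltaLin hQ a]
      rfl
  refine ⟨Q, hQ.omegaSkew, hsub.omegaSkew, fun a => ?_, hsub.mem_horizontal_iff.1 hvanish⟩
  rw [← hsub a, ← hV.mem_tailKer_symbolAction_iff_quasiconstant hb]
  exact hker _

theorem deltaLin_eq_zero_of_deltaLin_mem_constArrays {Q : PolyArray V l k}
    (hQ : Q ∈ skewArrays hV.quasiconstants l k)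
    (hδ : hV.deltaLin N Kc k Q ∈ constArrays hV.quasiconstants l N (k + 1)) :
    hV.deltaLin N Kc k Q = 0 := by
  cases k with
  | zero =>
    exact hV.deltaLin_eq_zero_of_mem_constArrays
      (hV.mem_constArrays_zero_of_deltaLin htwo hK hKinv hQ hδ.2.2)
  | succ k =>
    obtain ⟨R, hR, hQR⟩ := hV.exists_sub_deltaLin_mem_constArrays htwo hK hKinv hnorm hQ hδ.2.2
    have hsub := hV.deltaLin_eq_zero_of_mem_constArrays (Kc := Kc) hQR
    rwa [map_sub, hV.deltaLin_deltaLin htwo hK hR, sub_zero] at hsub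

theorem skewArrays_inf_ker_deltaLin_succ :
    skewArrays hV.quasiconstants l (k + 1) ⊓ LinearMap.ker (hV.deltaLin N Kc (k + 1)) =
      (skewArrays hV.quasiconstants l k).map (hV.deltaLin N Kc k) ⊔
        constArrays hV.quasiconstants l N (k + 1) := by
  apply le_antisymm
  · rintro P ⟨hP, hδ⟩
    obtain ⟨Q, hQ, hPQ⟩ := hV.exists_sub_deltaLin_mem_constArrays htwo hK hKinv hnorm hP
      fun a _ => by
        rw [LinearMap.mem_ker.1 hδ]
        rfl
    exact Submodule.mem_sup.2 ⟨_, ⟨Q, hQ, rfl⟩, _, hPQ, add_sub_cancel _ _⟩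
  · refine sup_le ?_ fun P hP => ⟨hP.1, hV.deltaLin_eq_zero_of_mem_constArrays hP⟩
    rintro _ ⟨Q, hQ, rfl⟩
    exact ⟨hV.deltaLin_mem_skewArrays htwo hQ, hV.deltaLin_deltaLin htwo hK hQ⟩

theorem map_deltaLin_skewArrays_inf_constArrays :
    (skewArrays hV.quasiconstants l k).map (hV.deltaLin N Kc k) ⊓
      constArrays hV.quasiconstants l N (k + 1) = ⊥ := by
  rw [Submodule.eq_bot_iff]
  rintro _ ⟨⟨Q, hQ, rfl⟩, hδ⟩
  exact hV.deltaLin_eq_zero_of_deltaLin_mem_constArrays htwo hK hKinv hnorm hQ hδ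

end Cohomology

end IsAlgDiffFun

theorem rank_quotient_comap_subtype_of_eq_sup {F M : Type*} [Ring F] [AddCommGroup M] [Module F M]
    {Z B O : Submodule F M} (hsup : Z = B ⊔ O) (hinf : B ⊓ O = ⊥) :
    Module.rank F (↥Z ⧸ B.comap Z.subtype) = Module.rank F O := by
  subst hsup
  have hcompl : IsCompl (B.comap (B ⊔ O).subtype) (O.comap (B ⊔ O).subtype) := by
    refine ⟨disjoint_iff.2 ?_, codisjoint_iff.2 ?_⟩
    · rw [← Submodule.comap_inf, hinf]
      exact Submodule.ker_subtype _
    · exact (Submodule.submoduleOf_sup_of_le le_sup_left le_sup_right).symm.trans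
        (Submodule.submoduleOf_self _)
  exact (Submodule.quotientEquivOfIsCompl _ _ hcompl).rank_eq.trans
    (Submodule.comapSubtypeEquivOfLe le_sup_right).rank_eq

theorem stmt_18_general (V : Type*) [CommRing V] [Nontrivial V]
    (htwo : ∀ x : V, x + x = 0 → x = 0)
    (l : ℕ) (hl : 0 < l) (pd : V → V) (D : Fin l → ℕ → V → V)
    (hV : IsAlgDiffFun pd D) (hnorm : IsNormalADF D)
    (Fq : Subring V) (hFq : ∀ x : V, x ∈ Fq ↔ ∀ (j : Fin l) (n : ℕ), D j n x = 0)
    (N : ℕ) (Kc : Fin l → Fin l → ℕ → V)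
    (hKquasi : ∀ (i j : Fin l) (m : ℕ), Kc i j m ∈ Fq)
    (hKinv : IsUnit (Matrix.of fun i j : Fin l => Kc i j N)) :
    (∀ (Z0 O0 : Submodule Fq (PolyArray V l 0)),
      (∀ P, P ∈ Z0 ↔ OmegaSkew P ∧ deltaK pd D N Kc P = 0) →
      (∀ P, P ∈ O0 ↔ OmegaSkew P ∧
          (∀ i m, MvPolynomial.coeff m (P i) ∈ Fq) ∧
          (∀ i, ∀ m ∈ (P i).support, ∀ α : Fin 0, m α < N)) →
      Z0 = O0 ∧ Module.rank Fq Z0 = ((N * l).choose 0 : Cardinal)) ∧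
    (∀ (k : ℕ) (Z B O : Submodule Fq (PolyArray V l (k + 1))),
      (∀ P, P ∈ Z ↔ OmegaSkew P ∧ deltaK pd D N Kc P = 0) →
      (∀ P, P ∈ B ↔ ∃ Q : PolyArray V l k, OmegaSkew Q ∧ P = deltaK pd D N Kc Q) →
      (∀ P, P ∈ O ↔ OmegaSkew P ∧
          (∀ i m, MvPolynomial.coeff m (P i) ∈ Fq) ∧
          (∀ i, ∀ m ∈ (P i).support, ∀ α : Fin (k + 1), m α < N)) →
      (Z = B ⊔ O ∧ B ⊓ O = ⊥) ∧
      Module.rank Fq (↥Z ⧸ Submodule.comap Z.subtype B)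
        = ((N * l).choose (k + 1) : Cardinal)) := by
  obtain rfl : Fq = hV.quasiconstants := Subring.ext hFq
  have : NeZero l := ⟨hl.ne'⟩
  constructor
  · intro Z O hZ hO
    obtain rfl : Z = skewArrays _ l 0 ⊓ LinearMap.ker (hV.deltaLin N Kc 0) := Submodule.ext hZ
    obtain rfl : O = constArrays _ l N 0 :=
      Submodule.ext fun P => (hO P).trans mem_constArrays_iff_coeff.symm
    rw [hV.skewArrays_inf_ker_deltaLin_zero htwo hKquasi hKinv]
    exact ⟨rfl, rank_constArrays htwo N⟩
  · intro k Z B O hZ hB hO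
    obtain rfl : Z = skewArrays _ l (k + 1) ⊓ LinearMap.ker (hV.deltaLin N Kc (k + 1)) :=
      Submodule.ext hZ
    obtain rfl : B = (skewArrays _ l k).map (hV.deltaLin N Kc k) := Submodule.ext fun P =>
      (hB P).trans (exists_congr fun Q => and_congr_right fun _ => eq_comm)
    obtain rfl : O = constArrays _ l N (k + 1) :=
      Submodule.ext fun P => (hO P).trans mem_constArrays_iff_coeff.symm
    have hsup := hV.skewArrays_inf_ker_deltaLin_succ (k := k) htwo hKquasi hKinv hnorm
    have hinf := hV.map_deltaLin_skewArrays_inf_constArrays (k := k) htwo hKquasi hKinv hnorm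
    refine ⟨⟨hsup, hinf⟩, ?_⟩
    rw [rank_quotient_comap_subtype_of_eq_sup hsup hinf, rank_constArrays htwo]

/-- Let `V` be a normal algebra of differential functions in `ℓ < ∞` differential
variables over a field of characteristic zero, whose algebra of quasiconstants `F` is a
field, and let `K(∂)` be an `ℓ×ℓ` matrix differential operator of order `N` with
quasiconstant coefficients and invertible leading coefficient.  Then for every `k ≥ 0`
one has `ker(δ_K : Ω̃^k → Ω̃^{k+1}) = δ_K(Ω̃^{k−1}) ⊕ Ω̃^k_{0,0}` (with `Ω̃^{−1} = 0`),
i.e. the inclusion `(Ω̃^•_{0,0}, 0) ⊆ (Ω̃^•(V), δ_K)` is a quasiisomorphism,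
and `H^k(Ω̃^•(V), δ_K)` is an `F`-vector space of dimension `Nℓ choose k`. -/
theorem stmt_18 (V : Type*) [CommRing V] [Algebra ℚ V] [Nontrivial V]
    (l : ℕ) (hl : 0 < l) (pd : V → V) (D : Fin l → ℕ → V → V)
    (hV : IsAlgDiffFun pd D) (hnorm : IsNormalADF D)
    (Fq : Subring V) (hFq : ∀ x : V, x ∈ Fq ↔ ∀ (j : Fin l) (n : ℕ), D j n x = 0)
    (hFfield : ∀ f ∈ Fq, f ≠ 0 → ∃ g ∈ Fq, f * g = 1)
    (N : ℕ) (Kc : Fin l → Fin l → ℕ → V)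
    (hKquasi : ∀ (i j : Fin l) (m : ℕ), Kc i j m ∈ Fq)
    (hKinv : IsUnit (Matrix.of fun i j : Fin l => Kc i j N)) :
    (∀ (Z0 O0 : Submodule Fq ((Fin 0 → Fin l) → MvPolynomial (Fin 0) V)),
      (∀ P, P ∈ Z0 ↔ OmegaSkew P ∧ deltaK pd D N Kc P = 0) →
      (∀ P, P ∈ O0 ↔ OmegaSkew P ∧
          (∀ i m, MvPolynomial.coeff m (P i) ∈ Fq) ∧
          (∀ i, ∀ m ∈ (P i).support, ∀ α : Fin 0, m α < N)) →
      Z0 = O0 ∧ Module.rank Fq Z0 = ((N * l).choose 0 : Cardinal)) ∧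
    (∀ (k : ℕ)
        (Z B O : Submodule Fq ((Fin (k + 1) → Fin l) → MvPolynomial (Fin (k + 1)) V)),
      (∀ P, P ∈ Z ↔ OmegaSkew P ∧ deltaK pd D N Kc P = 0) →
      (∀ P, P ∈ B ↔ ∃ Q : (Fin k → Fin l) → MvPolynomial (Fin k) V,
          OmegaSkew Q ∧ P = deltaK pd D N Kc Q) →
      (∀ P, P ∈ O ↔ OmegaSkew P ∧
          (∀ i m, MvPolynomial.coeff m (P i) ∈ Fq) ∧
          (∀ i, ∀ m ∈ (P i).support, ∀ α : Fin (k + 1), m α < N)) →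
      (Z = B ⊔ O ∧ B ⊓ O = ⊥) ∧
      Module.rank Fq (↥Z ⧸ Submodule.comap Z.subtype B)
        = ((N * l).choose (k + 1) : Cardinal)) :=
  have := IsAddTorsionFree.of_module_rat V
  stmt_18_general V
    (fun x hx => (nsmul_eq_zero_iff_right two_ne_zero).1 ((two_nsmul x).trans hx))
    l hl pd D hV hnorm Fq hFq N Kc hKquasi hKinv
end
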